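/- arXiv:1401.7151 — 6 statements merged into one kernel-verified Lean document; each statement's English description precedes it below -/
import Mathlib

section
/- Let T be a paracompact Hausdorff space. Suppose the map t ↦ X(t)₁ sending each point of T to the closed unit ball of X(t) is continuous with respect to the Hausdorff distance. Then for every t₀ ∈ T and every x₀ ∈ X(t₀) there exists a continuous function φ : T → X such that φ(t) ∈ X(t) for every t ∈ T and φ(t₀) = x₀. -/
open Filter Metric

/-!
The theorem is an instance of Michael's selection theorem. Apply it to the set-valued map equal
to `X(t)` for `t ≠ t₀` and to `{x₀}` at `t₀`: its values are nonempty, closed and convex, and it is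
lower hemicontinuous because Hausdorff continuity of the unit balls, after rescaling, shows that
every vector of `X(t)` is approximated by vectors of `X(s)` for `s` near `t`
(`eventually_mem_thickening_of_ball`); away from `t₀` the modification is invisible since points
are closed.

Michael's theorem (`exists_continuous_selection`) is proved in the usual way. Partitions of unity
improve a continuous `r`-approximate selection `f` to an `r'`-approximate one within distance `r`
of `f` (`exists_refined_approx_selection`); iterating with `r = 2⁻ⁿ` gives a uniformly Cauchy
sequence whose limit is a selection because the values are closed.
-/

open Topology

section Michael

variable {X : Type*} [NormedAddCommGroup X] [NormedSpace ℝ X]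
  {T : Type*} [TopologicalSpace T] [ParacompactSpace T] [T2Space T]

/-- One step of Michael's construction. The hypothesis `hl` is lower hemicontinuity of `F`. -/
lemma exists_refined_approx_selection {F : T → Set X} (hconv : ∀ t, Convex ℝ (F t))
    (hl : ∀ t, ∀ y ∈ F t, ∀ r : ℝ, 0 < r → ∀ᶠ s in 𝓝 t, y ∈ thickening r (F s))
    (f : C(T, X)) {r r' : ℝ} (hr' : 0 < r') (hf : ∀ t, f t ∈ thickening r (F t)) :
    ∃ g : C(T, X), ∀ t, g t ∈ thickening r' (F t) ∩ ball (f t) r := by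
  refine exists_continuous_forall_mem_convex_of_local_const
    (fun t => ((hconv t).thickening r').inter (convex_ball _ _)) fun t => ?_
  obtain ⟨c, hc, hd⟩ := mem_thickening_iff.1 (hf t)
  refine ⟨c, ?_⟩
  have hcont : ContinuousAt (fun s => dist (f s) c) t := by fun_prop
  filter_upwards [hl t c hc r' hr', hcont.eventually_lt continuousAt_const hd] with s h1 h2
  exact ⟨h1, mem_ball'.2 h2⟩

/-- Every lower hemicontinuous map with nonempty convex values has, for each `r > 0`, a continuous
`r`-approximate selection. -/
lemma exists_approx_selection {F : T → Set X} (hconv : ∀ t, Convex ℝ (F t))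
    (hne : ∀ t, (F t).Nonempty)
    (hl : ∀ t, ∀ y ∈ F t, ∀ r : ℝ, 0 < r → ∀ᶠ s in 𝓝 t, y ∈ thickening r (F s))
    {r : ℝ} (hr : 0 < r) : ∃ g : C(T, X), ∀ t, g t ∈ thickening r (F t) :=
  exists_continuous_forall_mem_convex_of_local_const (fun t => (hconv t).thickening r) fun t =>
    let ⟨c, hc⟩ := hne t
    ⟨c, hl t c hc r hr⟩

/-- Michael's selection theorem: a lower hemicontinuous map from a paracompact Hausdorff space to
the nonempty closed convex subsets of a Banach space has a continuous selection. -/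
theorem exists_continuous_selection [CompleteSpace X] {F : T → Set X}
    (hconv : ∀ t, Convex ℝ (F t)) (hne : ∀ t, (F t).Nonempty) (hcl : ∀ t, IsClosed (F t))
    (hl : ∀ t, ∀ y ∈ F t, ∀ r : ℝ, 0 < r → ∀ᶠ s in 𝓝 t, y ∈ thickening r (F s)) :
    ∃ φ : T → X, Continuous φ ∧ ∀ t, φ t ∈ F t := by
  have hpos : ∀ n : ℕ, (0 : ℝ) < (1 / 2) ^ n := fun n => by positivity
  let S : ℕ → Type _ := fun n => {f : C(T, X) // ∀ t, f t ∈ thickening ((1 / 2) ^ n) (F t)}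
  have hstep : ∀ n (f : S n), ∃ g : S (n + 1), ∀ t, dist (f.1 t) (g.1 t) ≤ 1 * (1 / 2) ^ n := by
    intro n f
    obtain ⟨g, hg⟩ := exists_refined_approx_selection hconv hl f.1 (hpos (n + 1)) f.2
    refine ⟨⟨g, fun t => (hg t).1⟩, fun t => ?_⟩
    rw [one_mul]
    exact (mem_ball'.1 (hg t).2).le
  choose next hnext using hstep
  obtain ⟨g₀, hg₀⟩ := exists_approx_selection hconv hne hl (hpos 0)
  let f : ∀ n, S n := fun n => Nat.rec ⟨g₀, hg₀⟩ (fun n g => next n g) n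
  have hf : ∀ t n, dist ((f n).1 t) ((f (n + 1)).1 t) ≤ 1 * (1 / 2) ^ n :=
    fun t n => hnext n (f n) t
  have hlim : ∀ t, ∃ y, Tendsto (fun n => (f n).1 t) atTop (𝓝 y) := fun t =>
    cauchySeq_tendsto_of_complete (cauchySeq_of_le_geometric _ _ (by norm_num) (hf t))
  choose φ hφ using hlim
  have hpow : Tendsto (fun n : ℕ => ((1 : ℝ) / 2) ^ n) atTop (𝓝 0) :=
    tendsto_pow_atTop_nhds_zero_of_lt_one (by norm_num) (by norm_num)
  refine ⟨φ, ?_, fun t => ?_⟩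
  · have hunif : TendstoUniformly (fun n t => (f n).1 t) φ atTop := by
      rw [Metric.tendstoUniformly_iff]
      intro ε hε
      have h2 : Tendsto (fun n : ℕ => 1 * ((1 : ℝ) / 2) ^ n / (1 - 1 / 2)) atTop (𝓝 0) := by
        simpa using (hpow.const_mul 1).div_const (1 - 1 / 2)
      filter_upwards [h2.eventually_lt_const hε] with n hn t
      rw [dist_comm]
      exact (dist_le_of_le_geometric_of_tendsto _ _ (by norm_num) (hf t) (hφ t) n).trans_lt hn
    exact hunif.continuous (Frequently.of_forall fun n => (f n).1.continuous)
  · rw [(hcl t).mem_iff_infDist_zero (hne t)]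
    have h1 : Tendsto (fun n => infDist ((f n).1 t) (F t)) atTop (𝓝 (infDist (φ t) (F t))) :=
      ((continuous_infDist_pt (F t)).tendsto _).comp (hφ t)
    refine tendsto_nhds_unique h1 (squeeze_zero (fun _ => infDist_nonneg) (fun n => ?_) hpow)
    obtain ⟨z, hz, hd⟩ := mem_thickening_iff.1 ((f n).2 t)
    exact (infDist_le_dist_of_mem hz).trans hd.le

end Michael

/-- Hausdorff continuity of the unit balls at `t` makes `X(·)` lower hemicontinuous at `t`. -/
lemma eventually_mem_thickening_of_ball {X : Type*} [NormedAddCommGroup X] [NormedSpace ℝ X]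
    {T : Type*} [TopologicalSpace T] (Xt : T → Submodule ℝ X)
    (B : T → Set X) (hB : ∀ t, B t = {x : X | x ∈ Xt t ∧ ‖x‖ ≤ 1}) (t : T)
    (hcont : ∀ ε : ℝ, 0 < ε → ∀ᶠ s in 𝓝 t, hausdorffDist (B t) (B s) < ε)
    {y : X} (hy : y ∈ Xt t) {r : ℝ} (hr : 0 < r) :
    ∀ᶠ s in 𝓝 t, y ∈ thickening r (Xt s : Set X) := by
  have hne : ∀ s, (B s).Nonempty := fun s => ⟨0, by simp [hB]⟩
  have hbd : ∀ s, Bornology.IsBounded (B s) := fun s =>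
    isBounded_closedBall.subset (s := B s) (t := closedBall 0 1) fun x hx => by
      rw [hB] at hx
      simpa using hx.2
  -- `y` is rescaled into the unit ball; adding `1` keeps the factor nonzero when `y = 0`.
  set c : ℝ := ‖y‖ + 1 with hc
  have hc0 : 0 < c := by positivity
  have hyB : c⁻¹ • y ∈ B t := by
    rw [hB]
    refine ⟨(Xt t).smul_mem _ hy, ?_⟩
    rw [norm_smul, norm_inv, Real.norm_of_nonneg hc0.le, inv_mul_le_iff₀ hc0]
    linarith
  filter_upwards [hcont (r / c) (div_pos hr hc0)] with s hs
  obtain ⟨z, hz, hd⟩ := exists_dist_lt_of_hausdorffDist_lt hyB hs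
    (hausdorffEDist_ne_top_of_nonempty_of_bounded (hne t) (hne s) (hbd t) (hbd s))
  rw [hB] at hz
  refine mem_thickening_iff.2 ⟨c • z, (Xt s).smul_mem _ hz.1, ?_⟩
  calc dist y (c • z) = dist (c • c⁻¹ • y) (c • z) := by rw [smul_inv_smul₀ hc0.ne']
    _ = c * dist (c⁻¹ • y) z := by rw [dist_smul₀, Real.norm_of_nonneg hc0.le]
    _ < r := by rwa [mul_comm, ← lt_div_iff₀ hc0]

/-- Over a paracompact Hausdorff base `T`, if `t ↦ X(t)₁` is continuous for the
Hausdorff distance then every point `x₀ ∈ X(t₀)` extends to a continuous selection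
`φ : T → X` with `φ(t) ∈ X(t)` for all `t` and `φ(t₀) = x₀`. -/
theorem continuous_selection_of_unit_ball_hausdorff_continuous_paracompact
    {X : Type*} [NormedAddCommGroup X] [NormedSpace ℝ X] [CompleteSpace X]
    {T : Type*} [TopologicalSpace T] [ParacompactSpace T] [T2Space T]
    (Xt : T → Submodule ℝ X) (hXt : ∀ t, IsClosed (Xt t : Set X))
    (B : T → Set X) (hB : ∀ t, B t = {x : X | x ∈ Xt t ∧ ‖x‖ ≤ 1})
    (hcont : ∀ t₀ : T, ∀ ε : ℝ, 0 < ε →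
      ∀ᶠ t in nhds t₀, Metric.hausdorffDist (B t₀) (B t) < ε) :
    ∀ t₀ : T, ∀ x₀ ∈ Xt t₀, ∃ φ : T → X,
      Continuous φ ∧ (∀ t : T, φ t ∈ Xt t) ∧ φ t₀ = x₀ := by
  classical
  intro t₀ x₀ hx₀
  obtain ⟨φ, hφ, hmem⟩ := exists_continuous_selection
    (F := fun t => if t = t₀ then {x₀} else (Xt t : Set X))
    (fun t => by
      split_ifs
      exacts [convex_singleton _, (Xt t).convex])
    (fun t => by
      split_ifs
      exacts [Set.singleton_nonempty _, ⟨0, (Xt t).zero_mem⟩])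
    (fun t => by
      split_ifs
      exacts [isClosed_singleton, hXt t])
    (fun t y hy r hr => by
      have hyt : y ∈ Xt t := by
        split_ifs at hy with h
        · rw [Set.mem_singleton_iff.1 hy, h]
          exact hx₀
        · exact hy
      have hev := eventually_mem_thickening_of_ball Xt B hB t (hcont t) hyt hr
      by_cases ht : t = t₀
      · rw [if_pos ht] at hy
        filter_upwards [hev] with s hs
        split_ifs
        exacts [self_subset_thickening hr _ hy, hs]
      · filter_upwards [hev, isOpen_ne.mem_nhds ht] with s hs hne
        rwa [if_neg hne])
  refine ⟨φ, hφ, fun t => ?_, by simpa using hmem t₀⟩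
  have h := hmem t
  split_ifs at h with ht
  · rw [Set.mem_singleton_iff.1 h, ht]
    exact hx₀
  · exact h
end

section
/- Let T be a locally compact Hausdorff space. Suppose the map t ↦ X(t)₁ sending each point of T to the closed unit ball of X(t) is continuous with respect to the Hausdorff distance. Then for every t₀ ∈ T and every x₀ ∈ X(t₀) there exists a continuous function φ : T → X such that φ(t) ∈ X(t) for every t ∈ T and φ(t₀) = x₀. -/
/-!
This is Michael's selection argument, run on a compact neighbourhood of the base point.

Hausdorff continuity of the unit balls makes `t ↦ X(t)` lower semicontinuous: a point of `X(s)` is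
within `ε` of `X(t)` for `t` near `s` (`eventually_mem_thickening`). Over a paracompact Hausdorff
base, a partition of unity therefore improves any continuous `f` with `f t` within `r` of `X(t)` to
a continuous `g` within an arbitrary `δ` of `X(t)`, at distance less than `r` from `f`, with the
value at `t₀` kept (`exists_better_approx`). Iterating with `r` halved each time gives a uniformly
convergent sequence whose limit is a selection, since `X(t)` is closed
(`exists_selection_of_paracompact`). Multiplying the selection on a compact neighbourhood of `t₀` by
an Urysohn function supported in it and extending by zero gives the global selection.
-/

open Filter Metric Topology

/-- Hausdorff continuity of the unit balls implies lower semicontinuity of the subspaces. -/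
theorem eventually_mem_thickening
    {X : Type*} [NormedAddCommGroup X] [NormedSpace ℝ X]
    {T : Type*} [TopologicalSpace T]
    (Xt : T → Submodule ℝ X)
    (B : T → Set X) (hB : ∀ t, B t = {x : X | x ∈ Xt t ∧ ‖x‖ ≤ 1})
    (hcont : ∀ t₀ : T, ∀ ε : ℝ, 0 < ε →
      ∀ᶠ t in 𝓝 t₀, Metric.hausdorffDist (B t₀) (B t) < ε)
    (s : T) (x : X) (hx : x ∈ Xt s) (ε : ℝ) (hε : 0 < ε) :
    ∀ᶠ t in 𝓝 s, x ∈ thickening ε (Xt t : Set X) := by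
  have hc : 0 < ‖x‖ + 1 := by positivity
  have hne : ∀ t, (B t).Nonempty := fun t => ⟨0, by simp [hB]⟩
  have hbd : ∀ t, Bornology.IsBounded (B t) := fun t =>
    (isBounded_closedBall (x := (0 : X)) (r := 1)).subset
      (fun y hy => by rw [hB] at hy; simpa using hy.2)
  -- rescale `x` into the unit ball of `X(s)`, approximate there, and scale back
  have hxB : (‖x‖ + 1)⁻¹ • x ∈ B s := by
    rw [hB]
    refine ⟨Submodule.smul_mem _ _ hx, ?_⟩
    rw [norm_smul, norm_inv, Real.norm_of_nonneg hc.le, inv_mul_le_iff₀ hc]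
    linarith
  filter_upwards [hcont s (ε / (‖x‖ + 1)) (by positivity)] with t ht
  obtain ⟨y, hy, hxy⟩ := exists_dist_lt_of_hausdorffDist_lt hxB ht
    (hausdorffEDist_ne_top_of_nonempty_of_bounded (hne s) (hne t) (hbd s) (hbd t))
  rw [hB] at hy
  refine mem_thickening_iff.2 ⟨(‖x‖ + 1) • y, Submodule.smul_mem _ _ hy.1, ?_⟩
  have h1 : x = (‖x‖ + 1) • ((‖x‖ + 1)⁻¹ • x) := by
    rw [smul_smul, mul_inv_cancel₀ hc.ne', one_smul]
  calc dist x ((‖x‖ + 1) • y)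
      = dist ((‖x‖ + 1) • ((‖x‖ + 1)⁻¹ • x)) ((‖x‖ + 1) • y) := by rw [← h1]
    _ = (‖x‖ + 1) * dist ((‖x‖ + 1)⁻¹ • x) y := by
        rw [dist_smul₀, Real.norm_of_nonneg hc.le]
    _ < ε := by rwa [lt_div_iff₀' hc] at hxy

/-- One step of Michael's iteration: an `r`-approximate selection is improved to a
`δ`-approximate one by a uniform perturbation of size less than `r` that fixes the value at `t₀`. -/
theorem exists_better_approx
    {X : Type*} [NormedAddCommGroup X] [NormedSpace ℝ X]
    {T : Type*} [TopologicalSpace T] [ParacompactSpace T] [T2Space T]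
    (Xt : T → Submodule ℝ X)
    (hlsc : ∀ s : T, ∀ x ∈ Xt s, ∀ ε : ℝ, 0 < ε →
      ∀ᶠ t in 𝓝 s, x ∈ thickening ε (Xt t : Set X))
    (t₀ : T) (x₀ : X) (hx₀ : x₀ ∈ Xt t₀) {r δ : ℝ} (hr : 0 < r) (hδ : 0 < δ)
    (f : C(T, X)) (hf : ∀ t, f t ∈ thickening r (Xt t : Set X)) (hf₀ : f t₀ = x₀) :
    ∃ g : C(T, X), (∀ t, g t ∈ thickening δ (Xt t : Set X)) ∧ g t₀ = x₀ ∧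
      ∀ t, dist (f t) (g t) < r := by
  have key : ∃ g : C(T, X), ∀ t, g t ∈
      ball (f t) r ∩ thickening δ (Xt t : Set X) ∩ {y | t = t₀ → y = x₀} := by
    refine exists_continuous_forall_mem_convex_of_local_const (fun t => ?_) (fun s => ?_)
    · refine ((convex_ball _ _).inter ((Xt t).convex.thickening δ)).inter ?_
      by_cases h : t = t₀
      · simp [h]
      · simp [h, convex_univ]
    · -- the local constant: `x₀` near `t₀`, and off `t₀` any point of `X(s)` close to `f s`
      have hloc : ∀ c ∈ Xt s, dist c (f s) < r → ∀ᶠ t in 𝓝 s,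
          c ∈ ball (f t) r ∩ thickening δ (Xt t : Set X) := by
        intro c hc hcf
        have h1 : ∀ᶠ t in 𝓝 s, dist c (f t) < r :=
          (continuous_const.dist f.continuous).continuousAt.eventually_lt
            continuousAt_const hcf
        filter_upwards [h1, hlsc s c hc δ hδ] with t h1 h2 using ⟨h1, h2⟩
      by_cases hs : s = t₀
      · subst hs
        refine ⟨x₀, ?_⟩
        filter_upwards [hloc x₀ hx₀ (by simpa [hf₀] using hr)] with t ht using ⟨ht, fun _ => rfl⟩
      · obtain ⟨c, hc, hcf⟩ := mem_thickening_iff.1 (hf s)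
        refine ⟨c, ?_⟩
        filter_upwards [hloc c hc (by rwa [dist_comm]), isOpen_ne.mem_nhds hs] with t ht hne
        exact ⟨ht, fun h => absurd h hne⟩
  obtain ⟨g, hg⟩ := key
  exact ⟨g, fun t => (hg t).1.2, (hg t₀).2 rfl, fun t => by
    rw [dist_comm]; exact (hg t).1.1⟩

/-- Michael's selection theorem, with a prescribed value at one point, for a lower semicontinuous
family of closed subspaces over a paracompact Hausdorff base. -/
theorem exists_selection_of_paracompact
    {X : Type*} [NormedAddCommGroup X] [NormedSpace ℝ X] [CompleteSpace X]
    {T : Type*} [TopologicalSpace T] [ParacompactSpace T] [T2Space T]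
    (Xt : T → Submodule ℝ X) (hXt : ∀ t, IsClosed (Xt t : Set X))
    (hlsc : ∀ s : T, ∀ x ∈ Xt s, ∀ ε : ℝ, 0 < ε →
      ∀ᶠ t in 𝓝 s, x ∈ thickening ε (Xt t : Set X))
    (t₀ : T) (x₀ : X) (hx₀ : x₀ ∈ Xt t₀) :
    ∃ φ : T → X, Continuous φ ∧ (∀ t : T, φ t ∈ Xt t) ∧ φ t₀ = x₀ := by
  -- `R` exceeds `‖x₀‖`, so the constant `x₀` is within `R` of `0 ∈ X(t)` for every `t`
  set R : ℝ := ‖x₀‖ + 1 with hR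
  have hRpos : 0 < R := by positivity
  have hr : ∀ n : ℕ, 0 < R / 2 ^ n := fun n => by positivity
  let P : ℕ → C(T, X) → Prop := fun n f =>
    (∀ t, f t ∈ thickening (R / 2 ^ n) (Xt t : Set X)) ∧ f t₀ = x₀
  have h0 : P 0 (ContinuousMap.const T x₀) := by
    refine ⟨fun t => mem_thickening_iff.2 ⟨0, (Xt t).zero_mem, ?_⟩, rfl⟩
    simp [hR]
  have hstep : ∀ n (f : {f // P n f}), ∃ g : {g // P (n + 1) g},
      ∀ t, dist (f.1 t) (g.1 t) < R / 2 ^ n := by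
    rintro n ⟨f, hf, hf₀⟩
    obtain ⟨g, hg, hg₀, hfg⟩ :=
      exists_better_approx Xt hlsc t₀ x₀ hx₀ (hr n) (hr (n + 1)) f hf hf₀
    exact ⟨⟨g, hg, hg₀⟩, hfg⟩
  choose next hnext using hstep
  let F : ∀ n, {f // P n f} := fun n => Nat.rec ⟨_, h0⟩ next n
  have hF : ∀ t n, dist ((F n).1 t) ((F (n + 1)).1 t) ≤ 2 * R / 2 / 2 ^ n := fun t n => by
    rw [mul_div_cancel_left₀ R two_ne_zero]
    exact (hnext n (F n) t).le
  have hlim : ∀ t, ∃ y, Tendsto (fun n => (F n).1 t) atTop (𝓝 y) := fun t =>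
    cauchySeq_tendsto_of_complete (cauchySeq_of_le_geometric_two (hF t))
  choose φ hφ using hlim
  have hdist : ∀ t n, dist ((F n).1 t) (φ t) ≤ 2 * R / 2 ^ n := fun t n =>
    dist_le_of_le_geometric_two_of_tendsto (hF t) (hφ t) n
  have hzero : ∀ c : ℝ, Tendsto (fun n : ℕ => c / 2 ^ n) atTop (𝓝 0) := fun c =>
    tendsto_const_nhds.div_atTop (tendsto_pow_atTop_atTop_of_one_lt one_lt_two)
  refine ⟨φ, ?_, fun t => ?_, ?_⟩
  · have hu : TendstoUniformly (fun n t => (F n).1 t) φ atTop := by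
      rw [Metric.tendstoUniformly_iff]
      intro ε hε
      filter_upwards [(hzero (2 * R)).eventually_lt_const hε] with n hn t
      rw [dist_comm]
      exact (hdist t n).trans_lt hn
    exact hu.continuous (Frequently.of_forall fun n => (F n).1.continuous)
  · have hcl : φ t ∈ closure (Xt t : Set X) := by
      rw [Metric.mem_closure_iff]
      intro ε hε
      obtain ⟨n, hn⟩ := ((hzero (3 * R)).eventually_lt_const hε).exists
      obtain ⟨z, hz, hzd⟩ := mem_thickening_iff.1 ((F n).2.1 t)
      refine ⟨z, hz, ?_⟩
      calc dist (φ t) z ≤ dist (φ t) ((F n).1 t) + dist ((F n).1 t) z := dist_triangle _ _ _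
        _ < 2 * R / 2 ^ n + R / 2 ^ n :=
            add_lt_add_of_le_of_lt (by rw [dist_comm]; exact hdist t n) hzd
        _ = 3 * R / 2 ^ n := by ring
        _ < ε := hn
    rwa [(hXt t).closure_eq] at hcl
  · refine tendsto_nhds_unique (hφ t₀) ?_
    simp only [(F _).2.2]
    exact tendsto_const_nhds

/-- Over a locally compact Hausdorff base `T`, if `t ↦ X(t)₁` is continuous for the
Hausdorff distance then every point `x₀ ∈ X(t₀)` extends to a continuous selection
`φ : T → X` with `φ(t) ∈ X(t)` for all `t` and `φ(t₀) = x₀`. -/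
theorem continuous_selection_of_unit_ball_hausdorff_continuous_locallyCompact
    {X : Type*} [NormedAddCommGroup X] [NormedSpace ℝ X] [CompleteSpace X]
    {T : Type*} [TopologicalSpace T] [LocallyCompactSpace T] [T2Space T]
    (Xt : T → Submodule ℝ X) (hXt : ∀ t, IsClosed (Xt t : Set X))
    (B : T → Set X) (hB : ∀ t, B t = {x : X | x ∈ Xt t ∧ ‖x‖ ≤ 1})
    (hcont : ∀ t₀ : T, ∀ ε : ℝ, 0 < ε →
      ∀ᶠ t in nhds t₀, Metric.hausdorffDist (B t₀) (B t) < ε) :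
    ∀ t₀ : T, ∀ x₀ ∈ Xt t₀, ∃ φ : T → X,
      Continuous φ ∧ (∀ t : T, φ t ∈ Xt t) ∧ φ t₀ = x₀ := by
  intro t₀ x₀ hx₀
  have hlsc := eventually_mem_thickening Xt B hB hcont
  obtain ⟨K, hK, hKt₀⟩ := exists_compact_mem_nhds t₀
  have : CompactSpace K := isCompact_iff_compactSpace.1 hK
  obtain ⟨g, hgc, hgX, hg₀⟩ := exists_selection_of_paracompact (fun t : K => Xt t)
    (fun t => hXt t)
    (fun s x hx ε hε => continuous_subtype_val.continuousAt.eventually (hlsc s x hx ε hε))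
    ⟨t₀, mem_of_mem_nhds hKt₀⟩ x₀ hx₀
  -- an Urysohn function equal to `1` at `t₀` with support inside the interior of `K`
  obtain ⟨χ, hχ1, -, hχK, -⟩ := exists_continuousMap_one_of_isCompact_subset_isOpen
    (isCompact_singleton (x := t₀)) isOpen_interior
    (Set.singleton_subset_iff.2 (mem_interior_iff_mem_nhds.2 hKt₀))
  classical
  let φ : T → X := fun t => if h : t ∈ K then χ t • g ⟨t, h⟩ else 0
  refine ⟨φ, ?_, fun t => ?_, ?_⟩
  · rw [continuous_iff_continuousAt]
    intro t
    by_cases ht : t ∈ interior K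
    · have hon : ContinuousOn φ K := by
        rw [continuousOn_iff_continuous_domRestrict]
        have : K.domRestrict φ = fun t : K => χ t • g t := by
          ext t
          simp [φ, Set.domRestrict_apply]
        rw [this]
        fun_prop
      exact hon.continuousAt (mem_interior_iff_mem_nhds.1 ht)
    · have hev : φ =ᶠ[𝓝 t] fun _ => 0 := by
        filter_upwards [(isClosed_tsupport χ).isOpen_compl.mem_nhds fun h => ht (hχK h)] with u hu
        have : χ u = 0 := image_eq_zero_of_notMem_tsupport hu
        simp [φ, this]
      exact continuousAt_const.congr hev.symm
  · by_cases h : t ∈ K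
    · simpa [φ, h] using (Xt t).smul_mem (χ t) (hgX ⟨t, h⟩)
    · simp [φ, h]
  · have : χ t₀ = 1 := hχ1 rfl
    simp [φ, mem_of_mem_nhds hKt₀, hg₀, this]
end

section
/- Let T be a locally compact Hausdorff space, t₀ ∈ T, and W a compact neighborhood of t₀. Suppose φ' : W → X is continuous with φ'(t) ∈ X(t) for every t ∈ W. Then there exists a continuous function φ : T → X such that φ(t) ∈ X(t) for every t ∈ T, φ(t) = 0 for every t ∉ W, and φ(t₀) = φ'(t₀). -/
/-!
Urysohn's lemma gives a continuous `f : T → ℝ` with `f t₀ = 1` whose closed support lies in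
the interior of `W`; the selection is `φ = f • φ'`. It is continuous at points of the support of
`f`, where `φ'` is continuous, and locally zero at all other points.
-/

open Filter Metric

/-- Over a locally compact Hausdorff base `T`, a continuous selection `φ'` of the
subspaces `X(t)` defined on a compact neighborhood `W` of `t₀` can be cut down to a global
continuous selection `φ` vanishing outside `W` and agreeing with `φ'` at `t₀`. -/
theorem continuous_selection_cutoff_of_compact_nbhd
    {X : Type*} [NormedAddCommGroup X] [NormedSpace ℝ X] [CompleteSpace X]
    {T : Type*} [TopologicalSpace T] [LocallyCompactSpace T] [T2Space T]
    (Xt : T → Submodule ℝ X)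
    (t₀ : T) (W : Set T) (hWcompact : IsCompact W) (hWnbhd : W ∈ nhds t₀)
    (φ' : T → X) (hφ'cont : ContinuousOn φ' W) (hφ'mem : ∀ t ∈ W, φ' t ∈ Xt t) :
    ∃ φ : T → X, Continuous φ ∧ (∀ t : T, φ t ∈ Xt t) ∧
      (∀ t ∉ W, φ t = 0) ∧ φ t₀ = φ' t₀ := by
  have hclosure : closure (interior W) ⊆ W :=
    closure_minimal interior_subset hWcompact.isClosed
  obtain ⟨f, hfsupp, hfone, -⟩ := exists_tsupport_one_of_isOpen_isClosed
    isOpen_interior (hWcompact.of_isClosed_subset isClosed_closure hclosure)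
    (isClosed_singleton (x := t₀))
    (Set.singleton_subset_iff.2 (mem_interior_iff_mem_nhds.2 hWnbhd))
  have hfzero : ∀ t ∉ W, f t = 0 := fun t ht =>
    image_eq_zero_of_notMem_tsupport fun h => ht (interior_subset (hfsupp h))
  refine ⟨fun t => f t • φ' t, continuous_iff_continuousAt.2 fun t => ?_, fun t => ?_,
    fun t ht => by simp [hfzero t ht], by simp [hfone (Set.mem_singleton t₀)]⟩
  · by_cases ht : t ∈ tsupport f
    · exact f.continuous.continuousAt.smul
        (hφ'cont.continuousAt (mem_interior_iff_mem_nhds.1 (hfsupp ht)))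
    -- `φ'` may be discontinuous here, but the product vanishes identically near `t`.
    · refine (continuousAt_const (y := (0 : X))).congr ?_
      filter_upwards [notMem_tsupport_iff_eventuallyEq.1 ht] with s hs
      simp [hs]
  · by_cases ht : t ∈ W
    · exact (Xt t).smul_mem _ (hφ'mem t ht)
    · simp [hfzero t ht]
end

section
/- For every l ≥ 2, if x ∈ K_l and y ∈ K_{l-1} then both xy and yx belong to K_{l-1}. -/
/-!
The operators `e p i j` are matrix units at each level `p`: `(e p i j)* = e p j i` and
`e p i j * e p k l = δ_{jk} e p i l`. Both follow by induction on `p`, passing to the strong limit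
in the recursion. The limit also yields the mixed products: since the sets `S_p` partition the
index set, every `k` is `n q r` for a unique pair `(q, r)`, so only one term of the series for
`e (p+1) i j` survives multiplication by `e p k l`, and the product is a level-`p` unit or zero.
Hence the `*`-algebra generated at level `p+1` multiplies the one generated at level `p` into
itself from both sides; joint continuity of multiplication carries this over to the closures.
-/


open Filter

open Pointwise

/-- The closed `*`-subalgebra of `B(H)` generated by `{e_{ij}^p : i, j}`. -/
noncomputable def Kset {H : Type*} [NormedAddCommGroup H] [InnerProductSpace ℂ H]
    [CompleteSpace H] (e : ℕ → ℕ → ℕ → (H →L[ℂ] H)) (p : ℕ) : Set (H →L[ℂ] H) :=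
  closure ((NonUnitalStarAlgebra.adjoin ℂ {T : H →L[ℂ] H | ∃ i j, T = e p i j} :
    NonUnitalStarSubalgebra ℂ (H →L[ℂ] H)) : Set (H →L[ℂ] H))

/-- `A_0 = K(H)` and `A_p = A_{p-1} + K_p`. -/
noncomputable def Aset {H : Type*} [NormedAddCommGroup H] [InnerProductSpace ℂ H]
    [CompleteSpace H] (e : ℕ → ℕ → ℕ → (H →L[ℂ] H)) : ℕ → Set (H →L[ℂ] H)
  | 0 => {T : H →L[ℂ] H | IsCompactOperator ⇑T}
  | (l + 1) => Aset e l + Kset e (l + 1)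

section MatrixUnits

set_option linter.unusedSectionVars false

variable {H : Type*} [NormedAddCommGroup H] [InnerProductSpace ℂ H] [CompleteSpace H]

/-- The multiplication rule of matrix units. -/
def MatrixUnitMul (u : ℕ → ℕ → (H →L[ℂ] H)) : Prop :=
  ∀ i j k l, u i j * u k l = if j = k then u i l else 0

/-- `u'` is obtained from `u` by `u' i j = ∑ m, u (n i m) (n j m)` in the strong topology. -/
def IsAmplification (n : ℕ → ℕ → ℕ) (u u' : ℕ → ℕ → (H →L[ℂ] H)) : Prop :=
  ∀ i j, ∀ v : H, Tendsto (fun M => ∑ m ∈ Finset.range M, u (n i m) (n j m) v) atTop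
    (nhds (u' i j v))

lemma partition_eq_iff {n : ℕ → ℕ → ℕ} (hmono : ∀ p, StrictMono (n p))
    (hdisj : ∀ p q, p ≠ q → ∀ k m, n p k ≠ n q m) (p q k m : ℕ) :
    n p k = n q m ↔ p = q ∧ k = m := by
  constructor
  · intro h
    by_cases hpq : p = q
    · subst hpq
      exact ⟨rfl, (hmono p).injective h⟩
    · exact absurd h (hdisj p q hpq k m)
  · rintro ⟨rfl, rfl⟩
    rfl

/-- Applied to a vector, the partial sums are eventually constant: only `m = r` contributes. -/
lemma amplification_mul {n : ℕ → ℕ → ℕ} (hmono : ∀ p, StrictMono (n p))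
    (hdisj : ∀ p q, p ≠ q → ∀ k m, n p k ≠ n q m) {u u' : ℕ → ℕ → (H →L[ℂ] H)}
    (hu : MatrixUnitMul u) (hrec : IsAmplification n u u') (i j q r l : ℕ) :
    u' i j * u (n q r) l = if j = q then u (n i r) l else 0 := by
  ext v
  refine tendsto_nhds_unique (hrec i j (u (n q r) l v)) ?_
  refine tendsto_const_nhds.congr' ?_
  filter_upwards [eventually_gt_atTop r] with M hM
  have h : ∀ m, u (n i m) (n j m) (u (n q r) l v) =
      if m = r then (if j = q then u (n i r) l else 0) v else 0 := by
    intro m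
    have := congrArg (fun T : H →L[ℂ] H => T v) (hu (n i m) (n j m) (n q r) l)
    simp only [mul_apply_eq_comp, partition_eq_iff hmono hdisj] at this
    rw [this]
    by_cases h1 : m = r <;> by_cases h2 : j = q <;> simp [h1, h2]
  simp only [h, Finset.sum_ite_eq', Finset.mem_range, hM, if_true]

lemma mul_amplification {n : ℕ → ℕ → ℕ} (hmono : ∀ p, StrictMono (n p))
    (hdisj : ∀ p q, p ≠ q → ∀ k m, n p k ≠ n q m) {u u' : ℕ → ℕ → (H →L[ℂ] H)}
    (hu : MatrixUnitMul u) (hrec : IsAmplification n u u') (a q r k l : ℕ) :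
    u a (n q r) * u' k l = if q = k then u a (n l r) else 0 := by
  ext v
  refine tendsto_nhds_unique
    (((u a (n q r)).continuous.tendsto _).comp (hrec k l v)) ?_
  refine tendsto_const_nhds.congr' ?_
  filter_upwards [eventually_gt_atTop r] with M hM
  have h : ∀ m, u a (n q r) (u (n k m) (n l m) v) =
      if m = r then (if q = k then u a (n l r) else 0) v else 0 := by
    intro m
    have := congrArg (fun T : H →L[ℂ] H => T v) (hu a (n q r) (n k m) (n l m))
    simp only [mul_apply_eq_comp, partition_eq_iff hmono hdisj] at this
    rw [this]
    by_cases h1 : m = r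
    · subst h1
      by_cases h2 : q = k <;> simp [h2]
    · simp [h1, Ne.symm h1]
  simp only [Function.comp, map_sum, h, Finset.sum_ite_eq', Finset.mem_range, hM, if_true]

lemma MatrixUnitMul.amplification {n : ℕ → ℕ → ℕ} (hmono : ∀ p, StrictMono (n p))
    (hdisj : ∀ p q, p ≠ q → ∀ k m, n p k ≠ n q m) {u u' : ℕ → ℕ → (H →L[ℂ] H)}
    (hu : MatrixUnitMul u) (hrec : IsAmplification n u u') : MatrixUnitMul u' := by
  intro i j k l
  ext v
  refine tendsto_nhds_unique (hrec i j (u' k l v)) ?_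
  have h : ∀ m, u (n i m) (n j m) (u' k l v) =
      if j = k then u (n i m) (n l m) v else 0 := by
    intro m
    have := congrArg (fun T : H →L[ℂ] H => T v)
      (mul_amplification hmono hdisj hu hrec (n i m) j m k l)
    simp only [mul_apply_eq_comp] at this
    rw [this]
    split_ifs <;> simp
  simp only [h]
  by_cases hjk : j = k
  · simpa [hjk] using hrec i l v
  · simp [hjk]

lemma star_amplification {n : ℕ → ℕ → ℕ} {u u' : ℕ → ℕ → (H →L[ℂ] H)}
    (hu : ∀ i j, star (u i j) = u j i) (hrec : IsAmplification n u u') (i j : ℕ) :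
    star (u' i j) = u' j i := by
  rw [ContinuousLinearMap.star_eq_adjoint]
  symm
  rw [ContinuousLinearMap.eq_adjoint_iff]
  intro v w
  refine tendsto_nhds_unique ((hrec j i v).inner tendsto_const_nhds) ?_
  refine (tendsto_const_nhds.inner (hrec i j w)).congr ?_
  intro M
  rw [inner_sum, sum_inner]
  refine Finset.sum_congr rfl fun m _ => ?_
  rw [← hu, ContinuousLinearMap.star_eq_adjoint, ContinuousLinearMap.adjoint_inner_right]

/-- The values on the basis determine `u i j` as the rank-one operator, as the span is dense. -/
lemma rankOne_apply (ξ : HilbertBasis ℕ ℂ H) {u : ℕ → ℕ → (H →L[ℂ] H)}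
    (h0 : ∀ i j k, u i j (ξ k) = if k = j then ξ i else 0) (i j : ℕ) (v : H) :
    u i j v = inner ℂ (ξ j) v • ξ i := by
  have h : u i j = (innerSL ℂ (ξ j)).smulRight (ξ i) := by
    refine ContinuousLinearMap.ext_on (s := Set.range ξ) ?_ ?_
    · rw [dense_iff_closure_eq, ← Submodule.topologicalClosure_coe, ξ.dense_span]
      rfl
    · rintro _ ⟨k, rfl⟩
      have := orthonormal_iff_ite.mp ξ.orthonormal j k
      by_cases hk : k = j
      · subst hk
        simp [h0, ξ.orthonormal.1]
      · simp [h0, hk, this, Ne.symm hk]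
  rw [h]
  simp

lemma matrixUnitMul_zero (ξ : HilbertBasis ℕ ℂ H) {u : ℕ → ℕ → (H →L[ℂ] H)}
    (h0 : ∀ i j k, u i j (ξ k) = if k = j then ξ i else 0) : MatrixUnitMul u := by
  intro i j k l
  ext v
  rw [mul_apply_eq_comp, rankOne_apply ξ h0 k l, map_smul, h0]
  by_cases h : j = k
  · simp [h, rankOne_apply ξ h0 i l]
  · simp [h, Ne.symm h]

lemma star_zero_level (ξ : HilbertBasis ℕ ℂ H) {u : ℕ → ℕ → (H →L[ℂ] H)}
    (h0 : ∀ i j k, u i j (ξ k) = if k = j then ξ i else 0) (i j : ℕ) :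
    star (u i j) = u j i := by
  rw [ContinuousLinearMap.star_eq_adjoint]
  symm
  rw [ContinuousLinearMap.eq_adjoint_iff]
  intro v w
  rw [rankOne_apply ξ h0, rankOne_apply ξ h0, inner_smul_left, inner_smul_right,
    inner_conj_symm, mul_comm]

/-- If the generating set `s` is self-adjoint and multiplies `t` into `adjoin t` from both sides,
then `adjoin t` is absorbing for `adjoin s`. -/
lemma adjoin_mul_mem {s t : Set (H →L[ℂ] H)} (hs : ∀ a ∈ s, star a ∈ s)
    (hst : ∀ a ∈ s, ∀ b ∈ t, a * b ∈ NonUnitalStarAlgebra.adjoin ℂ t ∧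
      b * a ∈ NonUnitalStarAlgebra.adjoin ℂ t)
    {x y : H →L[ℂ] H} (hx : x ∈ NonUnitalStarAlgebra.adjoin ℂ s)
    (hy : y ∈ NonUnitalStarAlgebra.adjoin ℂ t) :
    x * y ∈ NonUnitalStarAlgebra.adjoin ℂ t ∧ y * x ∈ NonUnitalStarAlgebra.adjoin ℂ t := by
  have key : ∀ y ∈ NonUnitalStarAlgebra.adjoin ℂ t, ∀ a ∈ s,
      a * y ∈ NonUnitalStarAlgebra.adjoin ℂ t ∧ y * a ∈ NonUnitalStarAlgebra.adjoin ℂ t := by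
    intro y hy
    induction hy using NonUnitalStarAlgebra.adjoin_induction with
    | mem b hb => exact fun a ha => hst a ha b hb
    | add b c _ _ hb hc =>
      intro a ha
      rw [mul_add, add_mul]
      exact ⟨add_mem (hb a ha).1 (hc a ha).1, add_mem (hb a ha).2 (hc a ha).2⟩
    | zero => simp
    | mul b c hb' hc' hb hc =>
      intro a ha
      rw [← mul_assoc, mul_assoc b c a]
      exact ⟨mul_mem (hb a ha).1 hc', mul_mem hb' (hc a ha).2⟩
    | smul r b _ hb =>
      intro a ha
      rw [mul_smul_comm, smul_mul_assoc]
      exact ⟨SMulMemClass.smul_mem r (hb a ha).1, SMulMemClass.smul_mem r (hb a ha).2⟩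
    | star b _ hb =>
      intro a ha
      have h := hb (star a) (hs a ha)
      exact ⟨by simpa using star_mem h.2, by simpa using star_mem h.1⟩
  induction hx using NonUnitalStarAlgebra.adjoin_induction generalizing y with
  | mem a ha => exact key y hy a ha
  | add b c _ _ hb hc =>
    rw [mul_add, add_mul]
    exact ⟨add_mem (hb hy).1 (hc hy).1, add_mem (hb hy).2 (hc hy).2⟩
  | zero => simp
  | mul b c _ _ hb hc =>
    rw [mul_assoc, ← mul_assoc y b c]
    exact ⟨(hb (hc hy).1).1, (hc (hb hy).2).2⟩
  | smul r b _ hb =>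
    rw [mul_smul_comm, smul_mul_assoc]
    exact ⟨SMulMemClass.smul_mem r (hb hy).1, SMulMemClass.smul_mem r (hb hy).2⟩
  | star b _ hb =>
    have h := hb (star_mem hy)
    exact ⟨by simpa using star_mem h.2, by simpa using star_mem h.1⟩

end MatrixUnits

/-- for `l ≥ 2`, if `x ∈ K_l` and `y ∈ K_{l-1}` then `x * y` and `y * x`
belong to `K_{l-1}`. -/
theorem Kl_mul_Klm1_mem
    {H : Type*} [NormedAddCommGroup H] [InnerProductSpace ℂ H] [CompleteSpace H]
    (ξ : HilbertBasis ℕ ℂ H)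
    (n : ℕ → ℕ → ℕ) (hmono : ∀ p, StrictMono (n p))
    (hdisj : ∀ p q, p ≠ q → ∀ k m, n p k ≠ n q m)
    (hcover : ∀ k, ∃ p m, n p m = k)
    (e : ℕ → ℕ → ℕ → (H →L[ℂ] H))
    (h0 : ∀ i j k, e 0 i j (ξ k) = if k = j then ξ i else 0)
    (hrec : ∀ p i j, ∀ v : H, Filter.Tendsto
      (fun M => ∑ m ∈ Finset.range M, e p (n i m) (n j m) v)
      Filter.atTop (nhds (e (p + 1) i j v)))
    :
    ∀ l : ℕ, 2 ≤ l → ∀ x ∈ Kset e l, ∀ y ∈ Kset e (l - 1),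
      x * y ∈ Kset e (l - 1) ∧ y * x ∈ Kset e (l - 1) := by
  have hunit : ∀ p, MatrixUnitMul (e p) := by
    intro p
    induction p with
    | zero => exact matrixUnitMul_zero ξ h0
    | succ p ih => exact ih.amplification hmono hdisj (hrec p)
  have hstar : ∀ p i j, star (e p i j) = e p j i := by
    intro p
    induction p with
    | zero => exact star_zero_level ξ h0
    | succ p ih => exact star_amplification ih (hrec p)
  intro l hl x hx y hy
  obtain ⟨p, rfl⟩ : ∃ p, l = p + 1 := ⟨l - 1, by omega⟩
  rw [Nat.add_sub_cancel] at *
  have hmul : ∀ a ∈ NonUnitalStarAlgebra.adjoin ℂ {T : H →L[ℂ] H | ∃ i j, T = e (p + 1) i j},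
      ∀ b ∈ NonUnitalStarAlgebra.adjoin ℂ {T : H →L[ℂ] H | ∃ i j, T = e p i j},
      a * b ∈ NonUnitalStarAlgebra.adjoin ℂ {T : H →L[ℂ] H | ∃ i j, T = e p i j} ∧
      b * a ∈ NonUnitalStarAlgebra.adjoin ℂ {T : H →L[ℂ] H | ∃ i j, T = e p i j} := by
    intro a ha b hb
    refine adjoin_mul_mem ?_ ?_ ha hb
    · rintro _ ⟨i, j, rfl⟩
      exact ⟨j, i, hstar _ _ _⟩
    · rintro _ ⟨i, j, rfl⟩ _ ⟨k, l, rfl⟩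
      constructor
      · obtain ⟨q, r, rfl⟩ := hcover k
        rw [amplification_mul hmono hdisj (hunit p) (hrec p)]
        split_ifs
        · exact NonUnitalStarAlgebra.subset_adjoin ℂ _ ⟨_, _, rfl⟩
        · exact zero_mem _
      · obtain ⟨q, r, rfl⟩ := hcover l
        rw [mul_amplification hmono hdisj (hunit p) (hrec p)]
        split_ifs
        · exact NonUnitalStarAlgebra.subset_adjoin ℂ _ ⟨_, _, rfl⟩
        · exact zero_mem _
  exact ⟨map_mem_closure₂ continuous_mul hx hy fun a ha b hb => (hmul a ha b hb).1,
    map_mem_closure₂ continuous_mul hy hx fun b hb a ha => (hmul a ha b hb).2⟩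
end

section
/- Fix l ≥ 1 and m ≥ 1, and let x = Σ_{i,j=1}^m α_{ij} e_{ij}^l be any linear combination of the e_{ij}^l with 1 ≤ i, j ≤ m. Then for every s ≥ 1, ‖x − x · Σ_{r=1}^s e_{rr}^{l-1}‖ = ‖x‖. Consequently the linear span B_l^m of {e_{ij}^l : 1 ≤ i, j ≤ m} intersects A_{l-1} only in 0. -/
/-!
At every level `p` the operators `e_{ij}^p` are matrix units acting by relabelling the basis: there
are a set `W` and a bijection `Φ : ℕ × W ≃ ℕ` with `e_{ij}^p ξ_{Φ(k,w)} = δ_{kj} ξ_{Φ(i,w)}`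
(`exists_model`); at level `p + 1` one takes `ℕ × W` and `(k,(t,w)) ↦ Φ(n_t^k, w)`. Write
`q_s^p = Σ_{r<s} e_{rr}^p`, a projection.

Norm identity. Let `V_s` be the isometry `ξ_{Φ(n_t^k, w)} ↦ ξ_{Φ(n_{t+s}^k, w)}`, with `Φ` a model
for level `l - 1`. It commutes with all `e_{ij}^l`, and `q_s^{l-1} V_s = 0` because `n_{t+s}^k ≥ s`.
Hence `‖x‖ = ‖V_s x‖ = ‖x V_s‖ = ‖x (1 - q_s^{l-1}) V_s‖ ≤ ‖x (1 - q_s^{l-1})‖` for `x` in the span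
(`norm_le_of_commute`); the other inequality holds since `1 - q_s^{l-1}` is a projection.

Trivial intersection. Every `y ∈ A_p` satisfies `‖y (1 - q_s^p)‖ → 0` as `s → ∞` (`vanishes_Aset`).
For compact `y` and `p = 0` this follows from strong convergence `1 - q_s^0 → 0`. The operators with
this property form a norm-closed left ideal, which contains the `e_{ij}^p` and so `K_p`; and the
property passes from `p` to `p + 1` because each `q_t^p` is dominated by some `q_s^{p+1}`.
-/

open Filter

open Pointwise

section Helpers

set_option linter.unusedSectionVars false

variable {H : Type*} [NormedAddCommGroup H] [InnerProductSpace ℂ H] [CompleteSpace H]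

/-! ### Models of the matrix units on the basis -/

/-- The family `E` acts on the basis `ξ`, relabelled by `Φ`, as matrix units tensored with the
identity of `ℓ²(W)`. -/
def IsModel (ξ : HilbertBasis ℕ ℂ H) (E : ℕ → ℕ → (H →L[ℂ] H)) {W : Type} (Φ : ℕ × W ≃ ℕ) : Prop :=
  ∀ i j k w, E i j (ξ (Φ (k, w))) = if k = j then ξ (Φ (i, w)) else 0

lemma ext_model (ξ : HilbertBasis ℕ ℂ H) {W : Type} (Φ : ℕ × W ≃ ℕ) {S T : H →L[ℂ] H}
    (h : ∀ k w, S (ξ (Φ (k, w))) = T (ξ (Φ (k, w)))) : S = T := by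
  refine ContinuousLinearMap.ext_on (s := Set.range ξ) ?_ ?_
  · exact Submodule.dense_iff_topologicalClosure_eq_top.2 ξ.dense_span
  · rintro _ ⟨a, rfl⟩
    have := h (Φ.symm a).1 (Φ.symm a).2
    simpa using this

/-- The bijection `(k, t) ↦ n_t^k` given by the partition. -/
noncomputable def pairEquiv (n : ℕ → ℕ → ℕ) (hmono : ∀ p, StrictMono (n p))
    (hdisj : ∀ p q, p ≠ q → ∀ k m, n p k ≠ n q m)
    (hcover : ∀ k, ∃ p m, n p m = k) : ℕ × ℕ ≃ ℕ :=
  Equiv.ofBijective (fun x => n x.1 x.2) (by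
    constructor
    · rintro ⟨p, k⟩ ⟨q, m⟩ h
      simp only at h
      have hpq : p = q := by
        by_contra hne
        exact hdisj p q hne k m h
      subst hpq
      rw [(hmono p).injective h]
    · intro k
      obtain ⟨p, m, h⟩ := hcover k
      exact ⟨(p, m), h⟩)

/-- The model at the next level: `(k, (t, w)) ↦ Φ (N (k, t), w)`. -/
def nextEquiv (N : ℕ × ℕ ≃ ℕ) {W : Type} (Φ : ℕ × W ≃ ℕ) : ℕ × (ℕ × W) ≃ ℕ :=
  (Equiv.prodAssoc ℕ ℕ W).symm.trans ((N.prodCongr (Equiv.refl W)).trans Φ)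

@[simp] lemma nextEquiv_apply (N : ℕ × ℕ ≃ ℕ) {W : Type} (Φ : ℕ × W ≃ ℕ) (k t : ℕ) (w : W) :
    nextEquiv N Φ (k, (t, w)) = Φ (N (k, t), w) := rfl

lemma IsModel.next {ξ : HilbertBasis ℕ ℂ H} {E E' : ℕ → ℕ → (H →L[ℂ] H)} {W : Type}
    {Φ : ℕ × W ≃ ℕ} (hE : IsModel ξ E Φ) (N : ℕ × ℕ ≃ ℕ)
    (hrec : ∀ i j, ∀ v : H, Filter.Tendsto
      (fun M => ∑ m ∈ Finset.range M, E (N (i, m)) (N (j, m)) v)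
      Filter.atTop (nhds (E' i j v))) :
    IsModel ξ E' (nextEquiv N Φ) := by
  rintro i j k ⟨t, w⟩
  refine tendsto_nhds_unique (hrec i j _) ?_
  refine tendsto_const_nhds.congr' ?_
  filter_upwards [Filter.eventually_gt_atTop t] with M hM
  simp only [nextEquiv_apply, hE (N (i, _)) (N (j, _)) _ w, N.injective.eq_iff, Prod.mk.injEq]
  by_cases hkj : k = j
  · simp [hkj, hM]
  · simp [hkj]

lemma exists_model (ξ : HilbertBasis ℕ ℂ H) (N : ℕ × ℕ ≃ ℕ) (e : ℕ → ℕ → ℕ → (H →L[ℂ] H))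
    (h0 : ∀ i j k, e 0 i j (ξ k) = if k = j then ξ i else 0)
    (hrec : ∀ p i j, ∀ v : H, Filter.Tendsto
      (fun M => ∑ m ∈ Finset.range M, e p (N (i, m)) (N (j, m)) v)
      Filter.atTop (nhds (e (p + 1) i j v))) (p : ℕ) :
    ∃ (W : Type) (Φ : ℕ × W ≃ ℕ), IsModel ξ (e p) Φ := by
  induction p with
  | zero => exact ⟨Unit, Equiv.prodPUnit ℕ, fun i j k _ => h0 i j k⟩
  | succ p ih =>
    obtain ⟨W, Φ, hE⟩ := ih
    exact ⟨ℕ × W, nextEquiv N Φ, hE.next N (hrec p)⟩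

namespace IsModel

variable {ξ : HilbertBasis ℕ ℂ H} {E : ℕ → ℕ → (H →L[ℂ] H)} {W : Type} {Φ : ℕ × W ≃ ℕ}

lemma mul_eq (hE : IsModel ξ E Φ) (i j k l : ℕ) :
    E i j * E k l = if j = k then E i l else 0 := by
  refine ext_model ξ Φ fun a w => ?_
  rw [mul_apply_eq_comp, hE k l a w]
  by_cases hal : a = l
  · by_cases hjk : j = k
    · simp [hal, hjk, hE _ _ _ w]
    · simp [hal, hjk, hE _ _ _ w, Ne.symm hjk]
  · by_cases hjk : j = k
    · simp [hal, hjk, hE _ _ _ w]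
    · simp [hal, hjk]

lemma star_eq (hE : IsModel ξ E Φ) (i j : ℕ) : star (E i j) = E j i := by
  refine ext_model ξ Φ fun a w => ?_
  refine ξ.repr.injective ?_
  ext b
  obtain ⟨⟨c, u⟩, rfl⟩ := Φ.surjective b
  simp only [HilbertBasis.repr_apply_apply, ContinuousLinearMap.star_eq_adjoint,
    ContinuousLinearMap.adjoint_inner_right]
  rw [hE, hE]
  have key := orthonormal_iff_ite.1 ξ.orthonormal
  have hΦ : ∀ x y, Φ x = Φ y ↔ x = y := fun x y => Φ.injective.eq_iff
  split_ifs <;> simp [key] <;> grind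

lemma sum_diag_apply (hE : IsModel ξ E Φ) (s k : ℕ) (w : W) :
    (∑ r ∈ Finset.range s, E r r) (ξ (Φ (k, w))) = if k < s then ξ (Φ (k, w)) else 0 := by
  simp only [sum_apply, hE _ _ k w]
  rw [Finset.sum_ite_eq]
  simp

lemma isStarProjection (hE : IsModel ξ E Φ) (s : ℕ) :
    IsStarProjection (∑ r ∈ Finset.range s, E r r) := by
  constructor
  · refine ext_model ξ Φ fun k w => ?_
    rw [mul_apply_eq_comp, hE.sum_diag_apply]
    split_ifs with h
    · rw [hE.sum_diag_apply, if_pos h]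
    · simp
  · simp [IsSelfAdjoint, star_sum, hE.star_eq]

lemma norm_one_sub_le (hE : IsModel ξ E Φ) (s : ℕ) :
    ‖1 - ∑ r ∈ Finset.range s, E r r‖ ≤ 1 :=
  (hE.isStarProjection s).one_sub.norm_le

end IsModel

/-! ### The shift isometry -/

/-- Any injective relabelling of a Hilbert basis is implemented by an isometry. -/
lemma exists_isometry (ξ : HilbertBasis ℕ ℂ H) (σ : ℕ → ℕ) (hσ : Function.Injective σ) :
    ∃ V : H →ₗᵢ[ℂ] H, ∀ a, V (ξ a) = ξ (σ a) := by
  have ho : Orthonormal ℂ (fun a => ξ (σ a)) := ξ.orthonormal.comp σ hσ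
  refine ⟨ho.orthogonalFamily.linearIsometry.comp ξ.repr.toLinearIsometry, fun a => ?_⟩
  classical
  simp [HilbertBasis.repr_self, OrthogonalFamily.linearIsometry_apply_single]

lemma exists_shift (ξ : HilbertBasis ℕ ℂ H) (N : ℕ × ℕ ≃ ℕ) (hN : ∀ k t, t ≤ N (k, t))
    {E E' : ℕ → ℕ → (H →L[ℂ] H)} {W : Type} {Φ : ℕ × W ≃ ℕ} (hE : IsModel ξ E Φ)
    (hE' : IsModel ξ E' (nextEquiv N Φ)) (s : ℕ) :
    ∃ V : H →ₗᵢ[ℂ] H, (∀ i j, E' i j * V.toContinuousLinearMap = V.toContinuousLinearMap * E' i j) ∧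
      (∑ r ∈ Finset.range s, E r r) * V.toContinuousLinearMap = 0 := by
  set Ψ := nextEquiv N Φ with hΨ
  obtain ⟨V, hV⟩ := exists_isometry ξ
    (fun a => Ψ ((Ψ.symm a).1, ((Ψ.symm a).2.1 + s, (Ψ.symm a).2.2))) (by
      intro a b h
      have h := Ψ.injective h
      apply Ψ.symm.injective
      simp only [Prod.mk.injEq, Nat.add_right_cancel_iff] at h
      exact Prod.ext h.1 (Prod.ext h.2.1 h.2.2))
  have hV' : ∀ k t w, V (ξ (Ψ (k, (t, w)))) = ξ (Ψ (k, (t + s, w))) := by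
    intro k t w
    rw [hV]
    simp
  refine ⟨V, fun i j => ?_, ?_⟩
  · refine ext_model ξ Ψ ?_
    rintro k ⟨t, w⟩
    simp only [mul_apply_eq_comp, LinearIsometry.coe_toContinuousLinearMap]
    rw [hV', hE', hE']
    split_ifs
    · rw [hV']
    · simp
  · refine ext_model ξ Ψ ?_
    rintro k ⟨t, w⟩
    simp only [mul_apply_eq_comp, LinearIsometry.coe_toContinuousLinearMap]
    rw [hV', hΨ, nextEquiv_apply, hE.sum_diag_apply, if_neg]
    · simp
    · have := hN k (t + s)
      omega

/-- Cutting off finitely many diagonal units `E` of one level does not decrease the norm of an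
operator in the span of the units `E'` of the next level, since the latter commutes with the shift. -/
lemma norm_le_of_commute (ξ : HilbertBasis ℕ ℂ H) (N : ℕ × ℕ ≃ ℕ) (hN : ∀ k t, t ≤ N (k, t))
    {E E' : ℕ → ℕ → (H →L[ℂ] H)} {W : Type} {Φ : ℕ × W ≃ ℕ} (hE : IsModel ξ E Φ)
    (hE' : IsModel ξ E' (nextEquiv N Φ)) (s : ℕ) {x : H →L[ℂ] H}
    (hx : x ∈ Submodule.span ℂ {T : H →L[ℂ] H | ∃ i j, T = E' i j}) :
    ‖x‖ ≤ ‖x * (1 - ∑ r ∈ Finset.range s, E r r)‖ := by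
  obtain ⟨V, hcomm, hzero⟩ := exists_shift ξ N hN hE hE' s
  have hxV : x * V.toContinuousLinearMap = V.toContinuousLinearMap * x := by
    induction hx using Submodule.span_induction with
    | mem x h => obtain ⟨i, j, rfl⟩ := h; exact hcomm i j
    | zero => simp
    | add x y _ _ hx hy => rw [add_mul, mul_add, hx, hy]
    | smul a x _ hx => rw [smul_mul_assoc, mul_smul_comm, hx]
  calc ‖x‖ = ‖V.toContinuousLinearMap * x‖ :=
        (LinearIsometry.norm_toContinuousLinearMap_comp V).symm
    _ = ‖x * (1 - ∑ r ∈ Finset.range s, E r r) * V.toContinuousLinearMap‖ := by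
        rw [← hxV, mul_assoc, sub_mul, hzero, one_mul, sub_zero]
    _ ≤ ‖x * (1 - ∑ r ∈ Finset.range s, E r r)‖ * ‖V.toContinuousLinearMap‖ := norm_mul_le _ _
    _ ≤ ‖x * (1 - ∑ r ∈ Finset.range s, E r r)‖ * 1 := by
        gcongr
        exact V.norm_toContinuousLinearMap_le
    _ = _ := mul_one _

/-! ### Operators approximated by their finite cut-offs -/

/-- `‖y (1 - q_s)‖ → 0`, where `q_s = Σ_{r<s} E_{rr}`. -/
def Vanishes (E : ℕ → ℕ → (H →L[ℂ] H)) (y : H →L[ℂ] H) : Prop :=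
  ∀ ε > 0, ∃ S, ∀ s ≥ S, ‖y * (1 - ∑ r ∈ Finset.range s, E r r)‖ ≤ ε

lemma Vanishes.add {E : ℕ → ℕ → (H →L[ℂ] H)} {x y : H →L[ℂ] H} (hx : Vanishes E x)
    (hy : Vanishes E y) : Vanishes E (x + y) := by
  intro ε hε
  obtain ⟨S, hS⟩ := hx (ε / 2) (half_pos hε)
  obtain ⟨T, hT⟩ := hy (ε / 2) (half_pos hε)
  refine ⟨max S T, fun s hs => ?_⟩
  rw [add_mul]
  have h1 := hS s (le_trans (le_max_left _ _) hs)
  have h2 := hT s (le_trans (le_max_right _ _) hs)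
  refine (norm_add_le _ _).trans ?_
  linarith

lemma Vanishes.left_mul {E : ℕ → ℕ → (H →L[ℂ] H)} {y : H →L[ℂ] H} (hy : Vanishes E y)
    (x : H →L[ℂ] H) : Vanishes E (x * y) := by
  intro ε hε
  obtain ⟨S, hS⟩ := hy (ε / (‖x‖ + 1)) (by positivity)
  refine ⟨S, fun s hs => ?_⟩
  rw [mul_assoc]
  calc _ ≤ ‖x‖ * ‖y * (1 - ∑ r ∈ Finset.range s, E r r)‖ := norm_mul_le _ _
    _ ≤ (‖x‖ + 1) * (ε / (‖x‖ + 1)) := by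
        gcongr
        · linarith
        · exact hS s hs
    _ = ε := by field_simp

lemma Vanishes.smul {E : ℕ → ℕ → (H →L[ℂ] H)} {y : H →L[ℂ] H} (hy : Vanishes E y)
    (a : ℂ) : Vanishes E (a • y) := by
  simpa using hy.left_mul (a • 1)

section

variable {ξ : HilbertBasis ℕ ℂ H} {E : ℕ → ℕ → (H →L[ℂ] H)} {W : Type} {Φ : ℕ × W ≃ ℕ}

lemma vanishes_closure (hE : IsModel ξ E Φ) {s : Set (H →L[ℂ] H)} (hs : ∀ y ∈ s, Vanishes E y)
    {y : H →L[ℂ] H} (hy : y ∈ closure s) : Vanishes E y := by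
  intro ε hε
  obtain ⟨z, hz, hyz⟩ := Metric.mem_closure_iff.1 hy (ε / 2) (half_pos hε)
  obtain ⟨S, hS⟩ := hs z hz (ε / 2) (half_pos hε)
  refine ⟨S, fun s hs => ?_⟩
  have h1 := hS s hs
  have h2 : ‖(y - z) * (1 - ∑ r ∈ Finset.range s, E r r)‖ ≤ ε / 2 := by
    rw [dist_eq_norm] at hyz
    calc _ ≤ ‖y - z‖ * ‖1 - ∑ r ∈ Finset.range s, E r r‖ := norm_mul_le _ _
      _ ≤ ‖y - z‖ * 1 := by gcongr; exact hE.norm_one_sub_le s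
      _ ≤ ε / 2 := by linarith
  calc ‖y * (1 - ∑ r ∈ Finset.range s, E r r)‖
      = ‖(y - z) * (1 - ∑ r ∈ Finset.range s, E r r)
          + z * (1 - ∑ r ∈ Finset.range s, E r r)‖ := by rw [← add_mul, sub_add_cancel]
    _ ≤ _ := norm_add_le _ _
    _ ≤ ε := by linarith

lemma vanishes_unit (hE : IsModel ξ E Φ) (i j : ℕ) : Vanishes E (E i j) := by
  intro ε hε
  refine ⟨j + 1, fun s hs => ?_⟩
  have : E i j * (1 - ∑ r ∈ Finset.range s, E r r) = 0 := by
    rw [mul_sub, Finset.mul_sum]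
    simp only [hE.mul_eq, mul_one]
    rw [Finset.sum_ite_eq, if_pos (Finset.mem_range.2 (by omega)), sub_self]
  rw [this, norm_zero]
  exact hε.le

lemma vanishes_adjoin (hE : IsModel ξ E Φ) {y : H →L[ℂ] H}
    (hy : y ∈ NonUnitalStarAlgebra.adjoin ℂ {T : H →L[ℂ] H | ∃ i j, T = E i j}) :
    Vanishes E y := by
  rw [← NonUnitalStarSubalgebra.mem_toNonUnitalSubalgebra,
    NonUnitalStarAlgebra.adjoin_toNonUnitalSubalgebra] at hy
  induction hy using NonUnitalAlgebra.adjoin_induction with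
  | mem x h =>
    rcases h with ⟨i, j, rfl⟩ | ⟨i, j, h⟩
    · exact vanishes_unit hE i j
    · rw [star_eq_iff_star_eq, hE.star_eq] at h
      exact h ▸ vanishes_unit hE j i
  | zero => simpa using (vanishes_unit hE 0 0).smul 0
  | add x y _ _ hx hy => exact hx.add hy
  | mul x y _ _ _ hy => exact hy.left_mul x
  | smul a x _ hx => exact hx.smul a

/-- Passing to the next level: `q_t` is dominated by `q'_s` for large `s`, so
`y (1 - q'_s) = y (1 - q_t) (1 - q'_s)`. -/
lemma Vanishes.next (N : ℕ × ℕ ≃ ℕ) {E' : ℕ → ℕ → (H →L[ℂ] H)} (hE : IsModel ξ E Φ)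
    (hE' : IsModel ξ E' (nextEquiv N Φ)) {y : H →L[ℂ] H} (hy : Vanishes E y) :
    Vanishes E' y := by
  intro ε hε
  obtain ⟨t, ht⟩ := hy ε hε
  have ht := ht t le_rfl
  -- `S` exceeds the index of every block `S_k` that meets `{0, …, t - 1}`.
  refine ⟨(Finset.range t).sup (fun a => (N.symm a).1 + 1), fun s hs => ?_⟩
  have hdom : (∑ r ∈ Finset.range t, E r r) * (1 - ∑ r ∈ Finset.range s, E' r r) = 0 := by
    refine ext_model ξ (nextEquiv N Φ) ?_
    rintro k ⟨u, w⟩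
    rw [mul_apply_eq_comp, sub_apply, hE'.sum_diag_apply]
    split_ifs with hk
    · simp
    · rw [sub_zero, one_apply_eq_self, nextEquiv_apply, hE.sum_diag_apply, if_neg]
      · simp
      · intro hlt
        have := Finset.le_sup (f := fun a => (N.symm a).1 + 1) (Finset.mem_range.2 hlt)
        simp only [Equiv.symm_apply_apply] at this
        omega
  have hsplit : y * (1 - ∑ r ∈ Finset.range s, E' r r) =
      y * (1 - ∑ r ∈ Finset.range t, E r r) * (1 - ∑ r ∈ Finset.range s, E' r r) := by
    rw [mul_assoc, sub_mul (1 : H →L[ℂ] H) (∑ r ∈ Finset.range t, E r r), hdom, one_mul, sub_zero]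
  rw [hsplit]
  calc _ ≤ ‖y * (1 - ∑ r ∈ Finset.range t, E r r)‖ * ‖1 - ∑ r ∈ Finset.range s, E' r r‖ :=
        norm_mul_le _ _
    _ ≤ ε * 1 := by gcongr; exact hE'.norm_one_sub_le s
    _ = ε := mul_one _

end

/-! ### Compact operators -/

/-- Contractions tending strongly to `0` tend to `0` uniformly on the image of the unit ball under
a compact operator. -/
lemma compact_norm_tendsto {P : ℕ → (H →L[ℂ] H)} (hP : ∀ s, ‖P s‖ ≤ 1)
    (hlim : ∀ v, Filter.Tendsto (fun s => P s v) Filter.atTop (nhds 0))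
    {T : H →L[ℂ] H} (hT : IsCompactOperator T) :
    ∀ ε > 0, ∃ S, ∀ s ≥ S, ‖P s * T‖ ≤ ε := by
  intro ε hε
  have hK : IsCompact (closure (T '' Metric.closedBall 0 1)) :=
    IsCompactOperator.isCompact_closure_image_closedBall (f := (T : H →ₗ[ℂ] H)) hT 1
  obtain ⟨F, hF, hcov⟩ := Metric.totallyBounded_iff.1 hK.totallyBounded (ε / 2) (half_pos hε)
  have hev : ∀ᶠ s in Filter.atTop, ∀ v ∈ F, ‖P s v‖ ≤ ε / 2 := by
    rw [Filter.eventually_all_finite hF]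
    intro v _
    have := (hlim v).norm
    rw [norm_zero] at this
    exact this.eventually_le_const (half_pos hε)
  obtain ⟨S, hS⟩ := Filter.eventually_atTop.1 hev
  refine ⟨S, fun s hs => ?_⟩
  refine ContinuousLinearMap.opNorm_le_of_unit_norm hε.le fun x hx => ?_
  have hx' : T x ∈ closure (T '' Metric.closedBall 0 1) :=
    subset_closure ⟨x, by simp [hx], rfl⟩
  obtain ⟨v, hv, hd⟩ := Set.mem_iUnion₂.1 (hcov hx')
  rw [Metric.mem_ball, dist_eq_norm] at hd
  have h1 := hS s hs v hv
  have h2 : ‖P s (T x - v)‖ ≤ ε / 2 := by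
    calc _ ≤ ‖P s‖ * ‖T x - v‖ := (P s).le_opNorm _
      _ ≤ 1 * ‖T x - v‖ := by gcongr; exact hP s
      _ ≤ ε / 2 := by linarith
  calc ‖(P s * T) x‖ = ‖P s (T x - v) + P s v‖ := by
        rw [← map_add, sub_add_cancel, mul_apply_eq_comp]
    _ ≤ _ := norm_add_le _ _
    _ ≤ ε := by linarith

lemma diag_tendsto (ξ : HilbertBasis ℕ ℂ H) {E : ℕ → ℕ → (H →L[ℂ] H)}
    (h0 : ∀ i j k, E i j (ξ k) = if k = j then ξ i else 0) (v : H) :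
    Filter.Tendsto (fun s => (1 - ∑ r ∈ Finset.range s, E r r) v) Filter.atTop (nhds 0) := by
  have hdiag : ∀ r, E r r v = ξ.repr v r • ξ r := by
    intro r
    have h1 := (ξ.hasSum_repr v).mapL (E r r)
    refine h1.unique ?_
    convert hasSum_single (α := H) (f := fun i => E r r (ξ.repr v i • ξ i)) r ?_ using 1
    · simp [h0]
    · intro i hi
      simp [h0, hi]
  have h := (ξ.hasSum_repr v).tendsto_sum_nat.const_sub v
  rw [sub_self] at h
  simpa [sum_apply, hdiag] using h

/-- With `p = 1 - q_s`, one has `‖y p‖² = ‖p (y* y) p‖ ≤ ‖p (y* y)‖`, and `y* y` is compact. -/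
lemma vanishes_compact (ξ : HilbertBasis ℕ ℂ H) {E : ℕ → ℕ → (H →L[ℂ] H)}
    (h0 : ∀ i j k, E i j (ξ k) = if k = j then ξ i else 0)
    {y : H →L[ℂ] H} (hy : IsCompactOperator y) : Vanishes E y := by
  have hE : IsModel ξ E (Equiv.prodPUnit ℕ) := fun i j k _ => h0 i j k
  intro ε hε
  have hc : IsCompactOperator (star y * y : H →L[ℂ] H) := hy.clm_comp (star y)
  obtain ⟨S, hS⟩ := compact_norm_tendsto hE.norm_one_sub_le (diag_tendsto ξ h0) hc (ε ^ 2)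
    (by positivity)
  refine ⟨S, fun s hs => ?_⟩
  have h1 := hS s hs
  have hp := (hE.isStarProjection s).one_sub
  have hn := hE.norm_one_sub_le s
  set p := 1 - ∑ r ∈ Finset.range s, E r r
  refine le_of_sq_le_sq ?_ hε.le
  calc ‖y * p‖ ^ 2 = ‖star (y * p) * (y * p)‖ := by rw [CStarRing.norm_star_mul_self, sq]
    _ = ‖p * (star y * y) * p‖ := by
        rw [star_mul, hp.isSelfAdjoint.star_eq]
        simp only [mul_assoc]
    _ ≤ ‖p * (star y * y)‖ * ‖p‖ := norm_mul_le _ _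
    _ ≤ ε ^ 2 * 1 := by gcongr
    _ = ε ^ 2 := mul_one _

lemma vanishes_Aset (ξ : HilbertBasis ℕ ℂ H) (N : ℕ × ℕ ≃ ℕ) (e : ℕ → ℕ → ℕ → (H →L[ℂ] H))
    (h0 : ∀ i j k, e 0 i j (ξ k) = if k = j then ξ i else 0)
    (hrec : ∀ p i j, ∀ v : H, Filter.Tendsto
      (fun M => ∑ m ∈ Finset.range M, e p (N (i, m)) (N (j, m)) v)
      Filter.atTop (nhds (e (p + 1) i j v))) (p : ℕ) :
    ∀ y ∈ Aset e p, Vanishes (e p) y := by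
  induction p with
  | zero => exact fun y hy => vanishes_compact ξ h0 hy
  | succ p ih =>
    obtain ⟨W, Φ, hE⟩ := exists_model ξ N e h0 hrec p
    have hE' := hE.next N (hrec p)
    rintro _ ⟨a, ha, b, hb, rfl⟩
    exact ((ih a ha).next N hE hE').add
      (vanishes_closure hE' (fun y hy => vanishes_adjoin hE' hy) hb)

end Helpers

/-- for `l ≥ 1`, `m ≥ 1` and `x = Σ_{i,j<m} α_{ij} e_{ij}^l`, one has
`‖x − x·Σ_{r<s} e_{rr}^{l-1}‖ = ‖x‖` for every `s`; consequently the linear span `B_l^m` of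
`{e_{ij}^l : i,j < m}` meets `A_{l-1}` only in `0`. -/
theorem span_Blm_intersect_Alm1_trivial
    {H : Type*} [NormedAddCommGroup H] [InnerProductSpace ℂ H] [CompleteSpace H]
    (ξ : HilbertBasis ℕ ℂ H)
    (n : ℕ → ℕ → ℕ) (hmono : ∀ p, StrictMono (n p))
    (hdisj : ∀ p q, p ≠ q → ∀ k m, n p k ≠ n q m)
    (hcover : ∀ k, ∃ p m, n p m = k)
    (e : ℕ → ℕ → ℕ → (H →L[ℂ] H))
    (h0 : ∀ i j k, e 0 i j (ξ k) = if k = j then ξ i else 0)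
    (hrec : ∀ p i j, ∀ v : H, Filter.Tendsto
      (fun M => ∑ m ∈ Finset.range M, e p (n i m) (n j m) v)
      Filter.atTop (nhds (e (p + 1) i j v)))
    :
    ∀ l : ℕ, 1 ≤ l → ∀ m : ℕ, 1 ≤ m →
      (∀ α : ℕ → ℕ → ℂ, ∀ s : ℕ,
        ‖(∑ i ∈ Finset.range m, ∑ j ∈ Finset.range m, α i j • e l i j) -
            (∑ i ∈ Finset.range m, ∑ j ∈ Finset.range m, α i j • e l i j) *
              (∑ r ∈ Finset.range s, e (l - 1) r r)‖ =
          ‖∑ i ∈ Finset.range m, ∑ j ∈ Finset.range m, α i j • e l i j‖) ∧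
      (∀ x ∈ Submodule.span ℂ
          {T : H →L[ℂ] H | ∃ i < m, ∃ j < m, T = e l i j},
        x ∈ Aset e (l - 1) → x = 0) := by
  intro l hl m _
  obtain ⟨p, rfl⟩ : ∃ p, l = p + 1 := ⟨l - 1, by omega⟩
  simp only [Nat.add_sub_cancel]
  set N := pairEquiv n hmono hdisj hcover with hNdef
  have hN : ∀ k t, t ≤ N (k, t) := fun k t => (hmono k).le_apply
  have hrec' : ∀ p i j, ∀ v : H, Filter.Tendsto
      (fun M => ∑ m ∈ Finset.range M, e p (N (i, m)) (N (j, m)) v)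
      Filter.atTop (nhds (e (p + 1) i j v)) := hrec
  obtain ⟨W, Φ, hE⟩ := exists_model ξ N e h0 hrec' p
  have hE' := hE.next N (hrec' p)
  constructor
  · intro α s
    set x := ∑ i ∈ Finset.range m, ∑ j ∈ Finset.range m, α i j • e (p + 1) i j with hx
    have hmem : x ∈ Submodule.span ℂ {T : H →L[ℂ] H | ∃ i j, T = e (p + 1) i j} :=
      Submodule.sum_mem _ fun i _ => Submodule.sum_mem _ fun j _ =>
        Submodule.smul_mem _ _ (Submodule.subset_span ⟨i, j, rfl⟩)
    have hfac : x - x * (∑ r ∈ Finset.range s, e p r r) =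
        x * (1 - ∑ r ∈ Finset.range s, e p r r) := by rw [mul_sub, mul_one]
    rw [hfac]
    refine le_antisymm ?_ (norm_le_of_commute ξ N hN hE hE' s hmem)
    calc _ ≤ ‖x‖ * ‖1 - ∑ r ∈ Finset.range s, e p r r‖ := norm_mul_le _ _
      _ ≤ ‖x‖ * 1 := by gcongr; exact hE.norm_one_sub_le s
      _ = ‖x‖ := mul_one _
  · intro x hx hA
    have hmem : x ∈ Submodule.span ℂ {T : H →L[ℂ] H | ∃ i j, T = e (p + 1) i j} := by
      refine Submodule.span_mono ?_ hx
      rintro _ ⟨i, _, j, _, rfl⟩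
      exact ⟨i, j, rfl⟩
    have hv := vanishes_Aset ξ N e h0 hrec' p x hA
    refine norm_le_zero_iff.1 (le_of_forall_pos_le_add fun ε hε => ?_)
    obtain ⟨S, hS⟩ := hv ε hε
    rw [zero_add]
    exact (norm_le_of_commute ξ N hN hE hE' S hmem).trans (hS S le_rfl)
end

section
/- For every l ≥ 1, every x ∈ A_l admits a unique decomposition x = x_{l-1} + x_{K_l} with x_{l-1} ∈ A_{l-1} and x_{K_l} ∈ K_l; the map x ↦ x_{K_l} is a *-homomorphism from A_l onto K_l; and the estimates ‖x_{K_l}‖ ≤ ‖x‖ and ‖x_{l-1}‖ ≤ 2‖x‖ hold for every x ∈ A_l. -/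
/-!
The heart of the matter is the estimate `‖k‖ ≤ ‖a + k‖` for `a ∈ A_{l-1}` and `k ∈ K_l`
(`Tower.norm_le_add`). It gives `A_{l-1} ∩ K_l = 0`, hence uniqueness of the decomposition, and it
says that the projection `a + k ↦ k` is contractive; the bound `2‖x‖` is the triangle inequality.

For the estimate, let `k = ∑ c_{ij} e^l_{ij}` be a finite combination of matrix units. As
`c ↦ ∑ c_{ij} e^l_{ij}` is a `*`-homomorphism of the `N × N` matrices, it is contractive, so
`‖k‖ ≤ ‖c‖`. Conversely, `H` contains a sequence of isometric copies of `ℂ^N`, spanned by basis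
vectors `ξ_{w(0,m)}, …, ξ_{w(N-1,m)}`, on which `k` acts as the matrix `c`
(`Tower.phi_copy`), and any `a ∈ A_{l-1}` tends to zero on the `m`-th copy (`Tower.tendsto_Aset`):
compact operators do because the vectors tend weakly to zero, and a matrix unit of level `q < l`
kills the `m`-th copy for all large `m`. So `‖c u‖ ≤ ‖a + k‖ ‖u‖`.

That the projection is a `*`-homomorphism amounts to `A_{l-1}` being a self-adjoint ideal of `A_l`.
This follows from `K_q K_p ⊆ K_q` for `q ≤ p`: by `Tower.mul_add` a product
`e^q_{bc} e^p_{ij}` is zero or some `e^q_{bd}`. For `A_0` it is Schauder's theorem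
that adjoints of compact operators are compact.
-/

open Filter

open Pointwise

/-! ### Compact operators -/

section Compact

variable {H : Type*} [NormedAddCommGroup H] [InnerProductSpace ℂ H] [CompleteSpace H]

/-- Schauder's theorem on a Hilbert space. A finite net for the image of the unit ball under the
compact operator `T T*` yields one under `T*`, because `‖T* z‖² = ⟪T T* z, z⟫`. -/
lemma isCompactOperator_star {T : H →L[ℂ] H} (hT : IsCompactOperator ⇑T) :
    IsCompactOperator ⇑(star T) := by
  have hS : IsCompactOperator ⇑(T * star T) := hT.comp_clm (star T)
  have key : ∀ z : H, ‖star T z‖ ^ 2 ≤ ‖(T * star T) z‖ * ‖z‖ := by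
    intro z
    have h : inner ℂ ((T * star T) z) z = (‖star T z‖ : ℂ) ^ 2 := by
      rw [ContinuousLinearMap.star_eq_adjoint, mul_apply_eq_comp,
        ← ContinuousLinearMap.adjoint_inner_right, inner_self_eq_norm_sq_to_K]
      rfl
    have h2 := norm_inner_le_norm (𝕜 := ℂ) ((T * star T) z) z
    rw [h] at h2
    simpa using h2
  have htb : TotallyBounded (⇑(T * star T) '' Metric.closedBall (0 : H) 1) :=
    (hS.isCompact_closure_image_closedBall
      (f := ((T * star T : H →L[ℂ] H) : H →ₗ[ℂ] H)) 1).totallyBounded.subset subset_closure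
  have : TotallyBounded (⇑(star T) '' Metric.closedBall (0 : H) 1) := by
    rw [Metric.totallyBounded_iff]
    intro ε hε
    obtain ⟨t, hts, htf, hcov⟩ :=
      Metric.finite_approx_of_totallyBounded htb (ε ^ 2 / 2) (by positivity)
    obtain ⟨t', ht's, ht'f, rfl⟩ := Set.exists_subset_image_finite_and.1 ⟨t, hts, htf, rfl⟩
    refine ⟨⇑(star T) '' t', ht'f.image _, ?_⟩
    rintro _ ⟨x, hx, rfl⟩
    have hx' := hcov ⟨x, hx, rfl⟩
    simp only [Set.mem_iUnion, Set.mem_image, exists_prop, exists_exists_and_eq_and,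
      Metric.mem_ball, dist_eq_norm] at hx' ⊢
    obtain ⟨y, hy, hxy⟩ := hx'
    refine ⟨y, hy, ?_⟩
    have hy1 := ht's hy
    rw [mem_closedBall_zero_iff] at hx hy1
    have h3 : ‖x - y‖ ≤ 2 := (norm_sub_le x y).trans (by linarith)
    have h4 := key (x - y)
    rw [map_sub, map_sub] at h4
    have h5 : ‖star T x - star T y‖ ^ 2 < ε ^ 2 := by
      have := norm_nonneg (x - y)
      have := norm_nonneg ((T * star T) x - (T * star T) y)
      nlinarith
    exact lt_of_pow_lt_pow_left₀ 2 hε.le h5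
  refine (isCompactOperator_iff_isCompact_closure_image_closedBall
    ((star T : H →L[ℂ] H) : H →ₗ[ℂ] H) zero_lt_one).2 ?_
  exact this.closure.isCompact_of_isClosed isClosed_closure

/-- A compact operator maps a sequence of basis vectors leaving every finite set to a norm-null
sequence: the only possible cluster point is the weak limit `0`. -/
lemma tendsto_compact_apply (ξ : HilbertBasis ℕ ℂ H) {T : H →L[ℂ] H}
    (hT : IsCompactOperator ⇑T) {z : ℕ → ℕ} (hz : Tendsto z atTop cofinite) :
    Tendsto (fun m => T (ξ (z m))) atTop (nhds 0) := by
  have hc := hT.isCompact_closure_image_closedBall (f := (T : H →ₗ[ℂ] H)) 1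
  refine hc.tendsto_nhds_of_unique_mapClusterPt (Eventually.of_forall fun m => ?_) ?_
  · refine subset_closure ⟨ξ (z m), ?_, rfl⟩
    simp [ξ.orthonormal.1 (z m)]
  · intro y _ hy
    have h1 : Tendsto (fun m => inner ℂ y (T (ξ (z m)))) atTop (nhds 0) := by
      have h2 : Tendsto (fun k => inner ℂ (ξ k) (star T y)) cofinite (nhds 0) := by
        have h3 := (ξ.orthonormal.inner_products_summable (star T y)).tendsto_cofinite_zero
        rw [tendsto_zero_iff_norm_tendsto_zero]
        have h4 := h3.sqrt
        simpa using h4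
      have h5 := (h2.comp hz).star
      simp only [star_zero] at h5
      refine h5.congr fun m => ?_
      simp only [Function.comp]
      rw [ContinuousLinearMap.star_eq_adjoint, ContinuousLinearMap.adjoint_inner_right]
      exact inner_conj_symm (𝕜 := ℂ) y (T (ξ (z m)))
    obtain ⟨φ, hφ, hy'⟩ := hy.tendsto_subseq
    have h6 : Tendsto (fun m => inner ℂ y (T (ξ (z (φ m))))) atTop (nhds (inner ℂ y y)) :=
      tendsto_const_nhds.inner hy'
    exact inner_self_eq_zero.1 (tendsto_nhds_unique h6 (h1.comp hφ.tendsto_atTop))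

end Compact

/-! ### The relations between the matrix units of different levels -/

/-- The data of the construction: `e` is the tower of matrix units built from the basis `ξ` and the
partition of `ℕ` into the sets `{n p m | m}`, and `k ↦ (g k, r k)` is the inverse of the bijection
`(p, m) ↦ n p m`. -/
structure Tower {H : Type*} [NormedAddCommGroup H] [InnerProductSpace ℂ H]
    [CompleteSpace H] (ξ : HilbertBasis ℕ ℂ H) (n : ℕ → ℕ → ℕ) (g r : ℕ → ℕ)
    (e : ℕ → ℕ → ℕ → (H →L[ℂ] H)) : Prop where
  base : ∀ i j k, e 0 i j (ξ k) = if k = j then ξ i else 0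
  step : ∀ p i j, ∀ v : H, Tendsto
      (fun M => ∑ m ∈ Finset.range M, e p (n i m) (n j m) v) atTop (nhds (e (p + 1) i j v))
  g_n : ∀ p m, g (n p m) = p
  r_n : ∀ p m, r (n p m) = m
  n_g_r : ∀ k, n (g k) (r k) = k

namespace Tower

lemma ext_basis {H : Type*} [NormedAddCommGroup H]
    [InnerProductSpace ℂ H] (ξ : HilbertBasis ℕ ℂ H) {S T : H →L[ℂ] H} (h : ∀ k, S (ξ k) = T (ξ k)) :
    S = T := by
  refine ContinuousLinearMap.ext_on (s := Set.range ξ) ?_ ?_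
  · exact Submodule.dense_iff_topologicalClosure_eq_top.2 ξ.dense_span
  · rintro _ ⟨k, rfl⟩
    exact h k

lemma tendsto_sum_single {H : Type*} [NormedAddCommGroup H] {f : ℕ → H} (m₀ : ℕ) (hf : ∀ m, m ≠ m₀ → f m = 0) :
    Tendsto (fun M => ∑ m ∈ Finset.range M, f m) atTop (nhds (f m₀)) :=
  (hasSum_single m₀ hf).tendsto_sum_nat

variable {H : Type*} [NormedAddCommGroup H] [InnerProductSpace ℂ H] [CompleteSpace H]
  {ξ : HilbertBasis ℕ ℂ H} {n : ℕ → ℕ → ℕ} {g r : ℕ → ℕ} {e : ℕ → ℕ → ℕ → (H →L[ℂ] H)}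

/-- Multiplying `e^q_{bc}` by `e^{p+1}_{ij} = ∑ₘ e^p_{n i m, n j m}` leaves at most one nonzero
term of the series, the one with `n i m = γ c`. -/
lemma mul_step (h : Tower ξ n g r e) {q p : ℕ} {γ : ℕ → ℕ} {D : ℕ → ℕ → ℕ}
    (hp : ∀ b c i j, e q b c * e p i j = if γ c = i then e q b (D j c) else 0) (b c i j : ℕ) :
    e q b c * e (p + 1) i j
      = if g (γ c) = i then e q b (D (n j (r (γ c))) c) else 0 := by
  ext v
  have h1 := ((e q b c).continuous.tendsto _).comp (h.step p i j v)
  have h2 : (⇑(e q b c) ∘ fun M => ∑ m ∈ Finset.range M, e p (n i m) (n j m) v)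
      = fun M => ∑ m ∈ Finset.range M,
        (if γ c = n i m then e q b (D (n j m) c) else 0 : H →L[ℂ] H) v := by
    funext M
    simp only [Function.comp, map_sum]
    refine Finset.sum_congr rfl fun m _ => ?_
    rw [← hp, mul_apply_eq_comp]
  rw [h2] at h1
  rw [mul_apply_eq_comp]
  refine tendsto_nhds_unique h1 ?_
  have h3 := tendsto_sum_single
    (f := fun m => (if γ c = n i m then e q b (D (n j m) c) else 0 : H →L[ℂ] H) v) (r (γ c)) ?_
  · convert h3 using 2
    by_cases hi : g (γ c) = i
    · have : γ c = n i (r (γ c)) := by rw [← hi, h.n_g_r]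
      simp only [if_pos hi, if_pos this]
    · have : ¬ γ c = n i (r (γ c)) := fun hh => hi (by rw [hh, h.g_n])
      simp only [if_neg hi, if_neg this]
  · intro m hm
    have : ¬ γ c = n i m := fun hh => hm (by rw [hh, h.r_n])
    simp [this]

lemma mul_self (h : Tower ξ n g r e) (q : ℕ) : ∀ b c i j,
    e q b c * e q i j = if c = i then e q b j else 0 := by
  induction q with
  | zero =>
    intro b c i j
    refine ext_basis ξ fun k => ?_
    rw [mul_apply_eq_comp, h.base]
    by_cases hk : k = j <;> by_cases hc : c = i <;> simp [hk, hc, h.base, eq_comm]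
  | succ q ih =>
    intro b c i j
    have h1 := h.mul_step (γ := id) (D := fun j _ => j) ih
    ext v
    rw [mul_apply_eq_comp]
    refine tendsto_nhds_unique (h.step q b c (e (q + 1) i j v)) ?_
    have h2 : ∀ m, e q (n b m) (n c m) (e (q + 1) i j v)
        = if c = i then e q (n b m) (n j m) v else 0 := by
      intro m
      rw [← mul_apply_eq_comp, h1]
      simp only [id, h.g_n, h.r_n]
      split_ifs <;> rfl
    simp only [h2]
    by_cases hc : c = i
    · simpa [hc] using h.step q b j v
    · simp [hc]

lemma mul_add (h : Tower ξ n g r e) (q t : ℕ) : ∃ D : ℕ → ℕ → ℕ, ∀ b c i j,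
    e q b c * e (q + t) i j = if g^[t] c = i then e q b (D j c) else 0 := by
  induction t with
  | zero => exact ⟨fun j _ => j, h.mul_self q⟩
  | succ t ih =>
    obtain ⟨D, hD⟩ := ih
    refine ⟨fun j c => D (n j (r (g^[t] c))) c, fun b c i j => ?_⟩
    rw [Function.iterate_succ_apply']
    exact h.mul_step hD b c i j

lemma star_e (h : Tower ξ n g r e) (q : ℕ) : ∀ i j, star (e q i j) = e q j i := by
  induction q with
  | zero =>
    intro i j
    refine ext_basis ξ fun k => ξ.repr.injective ?_
    ext m
    rw [ξ.repr_apply_apply, ξ.repr_apply_apply, ContinuousLinearMap.star_eq_adjoint,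
      ContinuousLinearMap.adjoint_inner_right, h.base, h.base]
    have := orthonormal_iff_ite.1 ξ.orthonormal
    by_cases hm : m = j <;> by_cases hk : k = i <;> simp [hm, hk, this, ξ.orthonormal.1]
    exact Ne.symm hk
  | succ q ih =>
    intro i j
    symm
    rw [ContinuousLinearMap.star_eq_adjoint, ContinuousLinearMap.eq_adjoint_iff]
    intro x y
    refine tendsto_nhds_unique ((h.step q j i x).inner (𝕜 := ℂ) (tendsto_const_nhds (x := y))) ?_
    refine ((tendsto_const_nhds (x := x)).inner (𝕜 := ℂ) (h.step q i j y)).congr fun M => ?_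
    rw [inner_sum, sum_inner]
    refine Finset.sum_congr rfl fun m _ => ?_
    rw [← ih, ContinuousLinearMap.star_eq_adjoint, ContinuousLinearMap.adjoint_inner_right]

lemma apply_eq_zero (h : Tower ξ n g r e) {q z c : ℕ} (hz : g^[q] z ≠ c) (b : ℕ) :
    e q b c (ξ z) = 0 := by
  obtain ⟨D, hD⟩ := h.mul_add 0 q
  have h1 := hD z z c b
  rw [if_neg hz, zero_add] at h1
  have h2 := congrArg star h1
  rw [star_mul, h.star_e, h.star_e, star_zero] at h2
  have h3 := congrArg (fun T : H →L[ℂ] H => T (ξ z)) h2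
  simpa [mul_apply_eq_comp, h.base] using h3

/-- A section of `g^[l]`, chosen so that `e^l_{ij}` sends `ξ_{sec l j}` to `ξ_{sec l i}`. -/
def sec (n : ℕ → ℕ → ℕ) : ℕ → ℕ → ℕ
  | 0, j => j
  | l + 1, j => sec n l (n j 0)

lemma g_sec (h : Tower ξ n g r e) (l : ℕ) : ∀ j, g^[l] (sec n l j) = j := by
  induction l with
  | zero => intro j; rfl
  | succ l ih =>
    intro j
    rw [Function.iterate_succ_apply', sec, ih, h.g_n]

lemma e_succ_sec_of (h : Tower ξ n g r e) {l : ℕ}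
    (hl : ∀ i j, e l i j (ξ (sec n l j)) = ξ (sec n l i)) (i j m : ℕ) :
    e (l + 1) i j (ξ (sec n l (n j m))) = ξ (sec n l (n i m)) := by
  refine tendsto_nhds_unique (h.step l i j _) ?_
  have h1 := tendsto_sum_single (f := fun k => e l (n i k) (n j k) (ξ (sec n l (n j m)))) m ?_
  · simpa only [hl] using h1
  · intro k hk
    refine h.apply_eq_zero ?_ _
    rw [h.g_sec]
    intro hh
    exact hk (by rw [← h.r_n j k, ← hh, h.r_n])

lemma e_sec (h : Tower ξ n g r e) (l : ℕ) :
    ∀ i j, e l i j (ξ (sec n l j)) = ξ (sec n l i) := by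
  induction l with
  | zero => intro i j; simp [sec, h.base]
  | succ l ih => intro i j; exact h.e_succ_sec_of ih i j 0

lemma e_succ_sec (h : Tower ξ n g r e) (l i j k m : ℕ) :
    e (l + 1) i j (ξ (sec n l (n k m))) = if j = k then ξ (sec n l (n i m)) else 0 := by
  split_ifs with hjk
  · subst hjk
    exact h.e_succ_sec_of (h.e_sec l) i j m
  · refine h.apply_eq_zero ?_ _
    rw [Function.iterate_succ_apply', h.g_sec, h.g_n]
    exact Ne.symm hjk

end Tower

/-! ### The algebras `K_p` -/

namespace Tower

variable {H : Type*} [NormedAddCommGroup H] [InnerProductSpace ℂ H] [CompleteSpace H]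
  {ξ : HilbertBasis ℕ ℂ H} {n : ℕ → ℕ → ℕ} {g r : ℕ → ℕ} {e : ℕ → ℕ → ℕ → (H →L[ℂ] H)}

/-- The `*`-homomorphism `c ↦ ∑ c_{ij} e^p_{ij}` on the `N × N` matrices. -/
noncomputable def phi (h : Tower ξ n g r e) (p N : ℕ) :
    Matrix (Fin N) (Fin N) ℂ →⋆ₙₐ[ℂ] (H →L[ℂ] H) where
  toFun c := ∑ i, ∑ j, c i j • e p i j
  map_smul' a c := by simp [Finset.smul_sum, mul_smul]
  map_zero' := by simp
  map_add' c d := by simp [add_smul, Finset.sum_add_distrib]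
  map_mul' c d := by
    rw [Finset.sum_mul]
    refine Finset.sum_congr rfl fun i _ => ?_
    simp only [Matrix.mul_apply, Finset.sum_smul]
    rw [Finset.sum_comm, Finset.sum_mul]
    refine Finset.sum_congr rfl fun k _ => ?_
    symm
    rw [Finset.mul_sum, Finset.sum_eq_single k]
    · rw [Finset.mul_sum]
      refine Finset.sum_congr rfl fun j _ => ?_
      rw [smul_mul_smul_comm, h.mul_self, if_pos rfl]
    · intro a _ ha
      rw [Finset.mul_sum]
      refine Finset.sum_eq_zero fun j _ => ?_
      rw [smul_mul_smul_comm, h.mul_self, if_neg (fun hh => ha (Fin.ext hh.symm)), smul_zero]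
    · simp
  map_star' c := by
    simp only [star_sum, star_smul, h.star_e, Matrix.star_apply]
    exact Finset.sum_comm

lemma phi_apply (h : Tower ξ n g r e) (p N : ℕ) (c : Matrix (Fin N) (Fin N) ℂ) :
    h.phi p N c = ∑ i, ∑ j, c i j • e p i j := rfl

/-- The generated algebra consists of the finite linear combinations of the matrix units. -/
lemma exists_phi_of_mem_adjoin (h : Tower ξ n g r e) (p : ℕ) {x : H →L[ℂ] H}
    (hx : x ∈ NonUnitalStarAlgebra.adjoin ℂ {T : H →L[ℂ] H | ∃ i j, T = e p i j}) :
    ∃ N, ∀ M, N ≤ M → ∃ c, x = h.phi p M c := by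
  induction hx using NonUnitalStarAlgebra.adjoin_induction with
  | mem x hx =>
    obtain ⟨i, j, rfl⟩ := hx
    refine ⟨max i j + 1, fun M hM =>
      ⟨Matrix.single ⟨i, by omega⟩ ⟨j, by omega⟩ 1, ?_⟩⟩
    rw [phi_apply, Finset.sum_eq_single ⟨i, by omega⟩, Finset.sum_eq_single ⟨j, by omega⟩]
    · simp
    · intro b _ hb
      simp [Matrix.single, Ne.symm hb]
    · simp
    · intro b _ hb
      simp [Matrix.single, Ne.symm hb]
    · simp
  | add x y _ _ hx hy =>
    obtain ⟨N, hN⟩ := hx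
    obtain ⟨N', hN'⟩ := hy
    refine ⟨max N N', fun M hM => ?_⟩
    obtain ⟨c, rfl⟩ := hN M (by omega)
    obtain ⟨d, rfl⟩ := hN' M (by omega)
    exact ⟨c + d, (map_add _ _ _).symm⟩
  | zero => exact ⟨0, fun M _ => ⟨0, (map_zero _).symm⟩⟩
  | mul x y _ _ hx hy =>
    obtain ⟨N, hN⟩ := hx
    obtain ⟨N', hN'⟩ := hy
    refine ⟨max N N', fun M hM => ?_⟩
    obtain ⟨c, rfl⟩ := hN M (by omega)
    obtain ⟨d, rfl⟩ := hN' M (by omega)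
    exact ⟨c * d, (map_mul _ _ _).symm⟩
  | smul a x _ hx =>
    obtain ⟨N, hN⟩ := hx
    refine ⟨N, fun M hM => ?_⟩
    obtain ⟨c, rfl⟩ := hN M hM
    exact ⟨a • c, (map_smul _ _ _).symm⟩
  | star x _ hx =>
    obtain ⟨N, hN⟩ := hx
    refine ⟨N, fun M hM => ?_⟩
    obtain ⟨c, rfl⟩ := hN M hM
    exact ⟨star c, (map_star _ _).symm⟩

/-- The linear span of the matrix units of level `p`. -/
def unitSpan (e : ℕ → ℕ → ℕ → (H →L[ℂ] H)) (p : ℕ) : Submodule ℂ (H →L[ℂ] H) :=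
  Submodule.span ℂ {T | ∃ i j, T = e p i j}

lemma Kset_eq (h : Tower ξ n g r e) (p : ℕ) :
    Kset e p = ((unitSpan e p).topologicalClosure : Set (H →L[ℂ] H)) := by
  rw [Kset, Submodule.topologicalClosure_coe]
  congr 1
  ext x
  constructor
  · intro hx
    obtain ⟨N, hN⟩ := h.exists_phi_of_mem_adjoin p hx
    obtain ⟨c, rfl⟩ := hN N le_rfl
    rw [phi_apply]
    exact Submodule.sum_mem _ fun i _ => Submodule.sum_mem _ fun j _ =>
      Submodule.smul_mem _ _ (Submodule.subset_span ⟨i, j, rfl⟩)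
  · intro hx
    refine Submodule.span_le (p := (NonUnitalStarAlgebra.adjoin ℂ
      {T : H →L[ℂ] H | ∃ i j, T = e p i j}).toSubmodule).2 ?_ hx
    exact NonUnitalStarAlgebra.subset_adjoin ℂ _

lemma Kset_add (h : Tower ξ n g r e) {p : ℕ} {x y : H →L[ℂ] H} (hx : x ∈ Kset e p)
    (hy : y ∈ Kset e p) : x + y ∈ Kset e p := by
  rw [h.Kset_eq] at *
  exact add_mem hx hy

lemma Kset_smul (h : Tower ξ n g r e) {p : ℕ} (c : ℂ) {x : H →L[ℂ] H} (hx : x ∈ Kset e p) :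
    c • x ∈ Kset e p := by
  rw [h.Kset_eq] at *
  exact Submodule.smul_mem _ c hx

lemma Kset_star {p : ℕ} {x : H →L[ℂ] H} (hx : x ∈ Kset e p) : star x ∈ Kset e p :=
  map_mem_closure continuous_star hx fun _ hy => star_mem hy

/-- `K_q K_p ⊆ K_q` for `q ≤ p`. -/
lemma Kset_mul (h : Tower ξ n g r e) {q p : ℕ} (hqp : q ≤ p) {x y : H →L[ℂ] H}
    (hx : x ∈ Kset e q) (hy : y ∈ Kset e p) : x * y ∈ Kset e q := by
  obtain ⟨t, rfl⟩ := Nat.exists_eq_add_of_le hqp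
  obtain ⟨D, hD⟩ := h.mul_add q t
  rw [h.Kset_eq] at *
  refine map_mem_closure₂ continuous_mul hx hy fun a ha b hb => ?_
  have h1 : a * b ∈ unitSpan e q * unitSpan e (q + t) := Submodule.mul_mem_mul ha hb
  rw [unitSpan, unitSpan, Submodule.span_mul_span] at h1
  refine Submodule.span_le.2 ?_ h1
  rintro _ ⟨_, ⟨b, c, rfl⟩, _, ⟨i, j, rfl⟩, rfl⟩
  simp only [hD]
  split_ifs
  · exact Submodule.subset_span ⟨_, _, rfl⟩
  · exact zero_mem _

lemma Kset_mul' (h : Tower ξ n g r e) {q p : ℕ} (hqp : q ≤ p) {x y : H →L[ℂ] H}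
    (hx : x ∈ Kset e q) (hy : y ∈ Kset e p) : y * x ∈ Kset e q := by
  have := Kset_star (h.Kset_mul hqp (Kset_star hx) (Kset_star hy))
  simpa using this

/-! ### The algebras `A_l` -/

lemma Aset_add (h : Tower ξ n g r e) (l : ℕ) : ∀ {x y : H →L[ℂ] H}, x ∈ Aset e l →
    y ∈ Aset e l → x + y ∈ Aset e l := by
  induction l with
  | zero => exact fun hx hy => IsCompactOperator.add hx hy
  | succ l ih =>
    rintro _ _ ⟨a, ha, k, hk, rfl⟩ ⟨a', ha', k', hk', rfl⟩
    exact ⟨a + a', ih ha ha', k + k', h.Kset_add hk hk', add_add_add_comm _ _ _ _⟩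

lemma Aset_smul (h : Tower ξ n g r e) (l : ℕ) (c : ℂ) : ∀ {x : H →L[ℂ] H}, x ∈ Aset e l →
    c • x ∈ Aset e l := by
  induction l with
  | zero => exact fun hx => IsCompactOperator.smul hx c
  | succ l ih =>
    rintro _ ⟨a, ha, k, hk, rfl⟩
    exact ⟨c • a, ih ha, c • k, h.Kset_smul c hk, (smul_add _ _ _).symm⟩

lemma Aset_star (l : ℕ) : ∀ {x : H →L[ℂ] H}, x ∈ Aset e l → star x ∈ Aset e l := by
  induction l with
  | zero => exact fun hx => isCompactOperator_star hx
  | succ l ih =>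
    rintro _ ⟨a, ha, k, hk, rfl⟩
    exact ⟨star a, ih ha, star k, Kset_star hk, (star_add _ _).symm⟩

/-- `A_l K_p ⊆ A_l` for `l ≤ p`. -/
lemma Aset_mul_Kset (h : Tower ξ n g r e) (l : ℕ) {p : ℕ} {y : H →L[ℂ] H} (hy : y ∈ Kset e p) :
    l ≤ p → ∀ {x : H →L[ℂ] H}, x ∈ Aset e l → x * y ∈ Aset e l := by
  induction l with
  | zero => exact fun _ _ hx => IsCompactOperator.comp_clm hx y
  | succ l ih =>
    rintro hp _ ⟨a, ha, k, hk, rfl⟩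
    exact ⟨a * y, ih (by omega) ha, k * y, h.Kset_mul hp hk hy, (add_mul _ _ _).symm⟩

lemma Kset_mul_Aset (h : Tower ξ n g r e) {l p : ℕ} {x y : H →L[ℂ] H} (hy : y ∈ Kset e p)
    (hp : l ≤ p) (hx : x ∈ Aset e l) : y * x ∈ Aset e l := by
  have := Aset_star l (h.Aset_mul_Kset l (Kset_star hy) hp (Aset_star l hx))
  simpa using this

lemma Aset_mul (h : Tower ξ n g r e) (l : ℕ) : ∀ {x y : H →L[ℂ] H}, x ∈ Aset e l →
    y ∈ Aset e l → x * y ∈ Aset e l := by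
  induction l with
  | zero => exact fun {x y} hx _ => IsCompactOperator.comp_clm hx y
  | succ l ih =>
    rintro _ _ ⟨a, ha, k, hk, rfl⟩ ⟨a', ha', k', hk', rfl⟩
    refine ⟨a * a' + a * k' + k * a', ?_, k * k', h.Kset_mul le_rfl hk hk', ?_⟩
    · exact h.Aset_add l (h.Aset_add l (ih ha ha') (h.Aset_mul_Kset l hk' (by omega) ha))
        (h.Kset_mul_Aset hk (by omega) ha')
    · simp only
      noncomm_ring

/-! ### The norm estimate -/

/-- An element of `A_l` maps `ξ_{z m}` to a norm-null sequence as soon as `g^[l] (z m)` leaves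
every finite set: a matrix unit of level `q ≤ l` kills `ξ_{z m}` for all large `m`. -/
lemma tendsto_Aset (h : Tower ξ n g r e) (l : ℕ) : ∀ {z : ℕ → ℕ},
    (∀ c, ∀ᶠ m in atTop, g^[l] (z m) ≠ c) → ∀ {a : H →L[ℂ] H}, a ∈ Aset e l →
    Tendsto (fun m => a (ξ (z m))) atTop (nhds 0) := by
  induction l with
  | zero =>
    intro z hz a ha
    refine tendsto_compact_apply ξ ha (le_cofinite_iff_eventually_ne.2 fun c => ?_)
    exact hz c
  | succ l ih =>
    rintro z hz _ ⟨a, ha, k, hk, rfl⟩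
    have hz' : ∀ c, ∀ᶠ m in atTop, g^[l] (z m) ≠ c := fun c => by
      filter_upwards [hz (g c)] with m hm hc
      exact hm (by rw [Function.iterate_succ_apply', hc])
    have hspan : ∀ s ∈ unitSpan e (l + 1), ∀ᶠ m in atTop, s (ξ (z m)) = 0 := by
      intro s hs
      induction hs using Submodule.span_induction with
      | mem x hx =>
        obtain ⟨i, j, rfl⟩ := hx
        filter_upwards [hz j] with m hm
        exact h.apply_eq_zero hm i
      | zero => simp
      | add x y _ _ hx hy =>
        filter_upwards [hx, hy] with m h1 h2
        simp [h1, h2]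
      | smul c x _ hx =>
        filter_upwards [hx] with m h1
        simp [h1]
    have hk0 : Tendsto (fun m => k (ξ (z m))) atTop (nhds 0) := by
      rw [h.Kset_eq] at hk
      rw [Metric.tendsto_nhds]
      intro ε hε
      obtain ⟨s, hs, hks⟩ := Metric.mem_closure_iff.1 hk ε hε
      filter_upwards [hspan s hs] with m hm
      have h1 := (k - s).le_opNorm (ξ (z m))
      rw [ξ.orthonormal.1, mul_one, sub_apply, hm, sub_zero] at h1
      rw [dist_zero_right]
      exact h1.trans_lt (by rwa [← dist_eq_norm])
    simpa using (ih hz' ha).add hk0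

/-- The isometric copy `∑ u_j ξ_{sec l (n j m)}` of a finite vector `u`; on these copies the matrix
units of level `l + 1` act as the standard ones. -/
noncomputable def copy (ξ : HilbertBasis ℕ ℂ H) (n : ℕ → ℕ → ℕ) (l m : ℕ) {N : ℕ}
    (u : EuclideanSpace ℂ (Fin N)) : H :=
  ∑ j : Fin N, u j • ξ (sec n l (n j m))

lemma norm_copy (h : Tower ξ n g r e) (l m : ℕ) {N : ℕ} (u : EuclideanSpace ℂ (Fin N)) :
    ‖copy ξ n l m u‖ = ‖u‖ := by
  have hinj : Function.Injective (fun j : Fin N => sec n l (n j m)) := by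
    intro i j hij
    have h1 := congrArg g (congrArg (g^[l]) hij)
    simp only [h.g_sec, h.g_n] at h1
    exact Fin.ext h1
  have h2 := (ξ.orthonormal.comp _ hinj).inner_sum u u Finset.univ
  have h3 : inner ℂ (copy ξ n l m u) (copy ξ n l m u) = inner ℂ u u := by
    rw [copy, PiLp.inner_apply]
    refine h2.trans (Finset.sum_congr rfl fun i _ => ?_)
    rw [RCLike.inner_apply']
  rw [inner_self_eq_norm_sq_to_K, inner_self_eq_norm_sq_to_K] at h3
  have h4 : ‖copy ξ n l m u‖ ^ 2 = ‖u‖ ^ 2 := by exact_mod_cast h3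
  exact (sq_eq_sq₀ (norm_nonneg _) (norm_nonneg _)).1 h4

lemma phi_copy (h : Tower ξ n g r e) (l m : ℕ) {N : ℕ} (c : Matrix (Fin N) (Fin N) ℂ)
    (u : EuclideanSpace ℂ (Fin N)) :
    h.phi (l + 1) N c (copy ξ n l m u)
      = copy ξ n l m (Matrix.toEuclideanCLM (n := Fin N) (𝕜 := ℂ) c u) := by
  simp only [phi_apply, copy, map_sum, map_smul, sum_apply,
    smul_apply, h.e_succ_sec, Matrix.ofLp_toEuclideanCLM, Matrix.mulVec,
    dotProduct, Fin.val_inj, Finset.sum_smul, Finset.smul_sum, smul_ite, smul_zero]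
  rw [Finset.sum_comm]
  refine Finset.sum_congr rfl fun i _ => ?_
  simp [smul_smul, mul_comm]

/-- `A_l` does not decrease the norm on `K_{l+1}`. For a finite combination `k = φ(c)`, the
`*`-homomorphism `φ` is contractive, so `‖k‖ ≤ ‖c‖`; and `‖c u‖ = ‖k u_m‖` for every isometric copy
`u_m` of `u`, while `a u_m → 0`. -/
lemma norm_le_add (h : Tower ξ n g r e) {l : ℕ} {a k : H →L[ℂ] H} (ha : a ∈ Aset e l)
    (hk : k ∈ Kset e (l + 1)) : ‖k‖ ≤ ‖a + k‖ := by
  have hclosed : IsClosed {k : H →L[ℂ] H | ‖k‖ ≤ ‖a + k‖} :=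
    isClosed_le continuous_norm (by fun_prop)
  refine closure_minimal (fun x hx => ?_) hclosed hk
  obtain ⟨N, hN⟩ := h.exists_phi_of_mem_adjoin (l + 1) hx
  obtain ⟨c, rfl⟩ := hN N le_rfl
  have h1 : ‖h.phi (l + 1) N c‖ ≤ ‖Matrix.toEuclideanCLM (n := Fin N) (𝕜 := ℂ) c‖ := by
    have := NonUnitalStarAlgHom.norm_apply_le
      ((h.phi (l + 1) N).comp ((Matrix.toEuclideanCLM (n := Fin N) (𝕜 := ℂ)).symm :
        (EuclideanSpace ℂ (Fin N) →L[ℂ] EuclideanSpace ℂ (Fin N)) →⋆ₙₐ[ℂ] _))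
      (Matrix.toEuclideanCLM (n := Fin N) (𝕜 := ℂ) c)
    simpa using this
  refine h1.trans (ContinuousLinearMap.opNorm_le_bound _ (norm_nonneg _) fun u => ?_)
  have hz : ∀ j : Fin N, Tendsto (fun m => a (ξ (sec n l (n j m)))) atTop (nhds 0) := by
    intro j
    refine h.tendsto_Aset l (fun c => ?_) ha
    simp only [h.g_sec]
    filter_upwards [eventually_gt_atTop (r c)] with m hm hc
    rw [← hc, h.r_n] at hm
    exact lt_irrefl _ hm
  have h2 : Tendsto (fun m => a (copy ξ n l m u)) atTop (nhds 0) := by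
    simp only [copy, map_sum, map_smul]
    have := tendsto_finsetSum Finset.univ fun j _ => (hz j).const_smul (u j)
    simpa using this
  have h3 : Tendsto (fun m => ‖a + h.phi (l + 1) N c‖ * ‖u‖ + ‖a (copy ξ n l m u)‖) atTop
      (nhds (‖a + h.phi (l + 1) N c‖ * ‖u‖)) := by
    simpa using (tendsto_const_nhds (x := ‖a + h.phi (l + 1) N c‖ * ‖u‖)).add h2.norm
  refine ge_of_tendsto' h3 fun m => ?_
  rw [← h.norm_copy l m, ← h.phi_copy]
  have h4 := (a + h.phi (l + 1) N c).le_opNorm (copy ξ n l m u)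
  rw [h.norm_copy] at h4
  have h5 : h.phi (l + 1) N c (copy ξ n l m u)
      = (a + h.phi (l + 1) N c) (copy ξ n l m u) - a (copy ξ n l m u) := by simp
  rw [h5]
  exact (norm_sub_le _ _).trans (by linarith)

end Tower

/-- for every `l ≥ 1`, every `x ∈ A_l` decomposes uniquely as
`x = x_{l-1} + x_{K_l}` with `x_{l-1} ∈ A_{l-1}`, `x_{K_l} ∈ K_l`; the map `x ↦ x_{K_l}`
is a `*`-homomorphism of `A_l` onto `K_l` satisfying `‖x_{K_l}‖ ≤ ‖x‖` and
`‖x_{l-1}‖ ≤ 2‖x‖`. -/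
theorem Al_decomposition
    {H : Type*} [NormedAddCommGroup H] [InnerProductSpace ℂ H] [CompleteSpace H]
    (ξ : HilbertBasis ℕ ℂ H)
    (n : ℕ → ℕ → ℕ) (hmono : ∀ p, StrictMono (n p))
    (hdisj : ∀ p q, p ≠ q → ∀ k m, n p k ≠ n q m)
    (hcover : ∀ k, ∃ p m, n p m = k)
    (e : ℕ → ℕ → ℕ → (H →L[ℂ] H))
    (h0 : ∀ i j k, e 0 i j (ξ k) = if k = j then ξ i else 0)
    (hrec : ∀ p i j, ∀ v : H, Filter.Tendsto
      (fun M => ∑ m ∈ Finset.range M, e p (n i m) (n j m) v)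
      Filter.atTop (nhds (e (p + 1) i j v)))
    :
    ∀ l : ℕ, 1 ≤ l →
      (∀ x ∈ Aset e l, ∀ a ∈ Aset e (l - 1), ∀ a' ∈ Aset e (l - 1),
        ∀ k ∈ Kset e l, ∀ k' ∈ Kset e l, x = a + k → x = a' + k' → a = a' ∧ k = k') ∧
      (∃ π : (H →L[ℂ] H) → (H →L[ℂ] H),
        (∀ x ∈ Aset e l, π x ∈ Kset e l ∧ x - π x ∈ Aset e (l - 1)) ∧
        (∀ x ∈ Aset e l, ∀ y ∈ Aset e l,
          π (x + y) = π x + π y ∧ π (x * y) = π x * π y) ∧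
        (∀ c : ℂ, ∀ x ∈ Aset e l, π (c • x) = c • π x) ∧
        (∀ x ∈ Aset e l, π (star x) = star (π x)) ∧
        (∀ k ∈ Kset e l, ∃ x ∈ Aset e l, π x = k) ∧
        (∀ x ∈ Aset e l, ‖π x‖ ≤ ‖x‖ ∧ ‖x - π x‖ ≤ 2 * ‖x‖)) := by
  intro l hl
  -- The sets `{n p m | m}` partition `ℕ`, so `(p, m) ↦ n p m` has an inverse `k ↦ (g k, r k)`.
  choose g r hgr using hcover
  have hg : ∀ p m, g (n p m) = p := fun p m => by
    by_contra hne
    exact hdisj _ _ hne _ _ (hgr (n p m))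
  have h : Tower ξ n g r e :=
    ⟨h0, hrec, hg, fun p m => (hmono p).injective (by simpa only [hg] using hgr (n p m)), hgr⟩
  obtain ⟨l, rfl⟩ : ∃ t, l = t + 1 := ⟨l - 1, by omega⟩
  simp only [Nat.add_sub_cancel]
  have hneg : ∀ {x y : H →L[ℂ] H}, x ∈ Aset e l → y ∈ Aset e l → x - y ∈ Aset e l := by
    intro x y hx hy
    simpa [sub_eq_add_neg] using h.Aset_add l hx (h.Aset_smul l (-1) hy)
  have hnegK : ∀ {x y : H →L[ℂ] H}, x ∈ Kset e (l + 1) → y ∈ Kset e (l + 1) →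
      x - y ∈ Kset e (l + 1) := by
    intro x y hx hy
    simpa [sub_eq_add_neg] using h.Kset_add hx (h.Kset_smul (-1) hy)
  have huniq : ∀ a ∈ Aset e l, ∀ a' ∈ Aset e l, ∀ k ∈ Kset e (l + 1), ∀ k' ∈ Kset e (l + 1),
      a + k = a' + k' → a = a' ∧ k = k' := by
    intro a ha a' ha' k hk k' hk' heq
    have h1 := h.norm_le_add (hneg ha ha') (hnegK hk hk')
    have h2 : a - a' + (k - k') = 0 := by rw [sub_add_sub_comm, heq, sub_self]
    rw [h2, norm_zero] at h1
    have h3 : k = k' := sub_eq_zero.1 (norm_le_zero_iff.1 h1)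
    subst h3
    exact ⟨add_right_cancel heq, rfl⟩
  refine ⟨fun x _ a ha a' ha' k hk k' hk' h1 h2 =>
    huniq a ha a' ha' k hk k' hk' (h1.symm.trans h2), ?_⟩
  have hex : ∀ x : H →L[ℂ] H, ∃ k, x ∈ Aset e (l + 1) →
      k ∈ Kset e (l + 1) ∧ x - k ∈ Aset e l := by
    intro x
    by_cases hx : x ∈ Aset e (l + 1)
    · obtain ⟨a, ha, k, hk, rfl⟩ := hx
      exact ⟨k, fun _ => ⟨hk, by simpa using ha⟩⟩
    · exact ⟨0, fun hx' => absurd hx' hx⟩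
  choose π hπ using hex
  have hπ_eq : ∀ a ∈ Aset e l, ∀ k ∈ Kset e (l + 1), π (a + k) = k := by
    intro a ha k hk
    obtain ⟨h1, h2⟩ := hπ (a + k) ⟨a, ha, k, hk, rfl⟩
    exact (huniq _ h2 _ ha _ h1 _ hk (sub_add_cancel _ _)).2
  have hzero : (0 : H →L[ℂ] H) ∈ Aset e l := by
    have : ∀ l, (0 : H →L[ℂ] H) ∈ Aset e l := by
      intro l
      induction l with
      | zero => exact isCompactOperator_zero
      | succ l ih => exact ⟨0, ih, 0, subset_closure (zero_mem _), add_zero _⟩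
    exact this l
  refine ⟨π, hπ, ?_, ?_, ?_, ?_, ?_⟩
  · rintro _ ⟨a, ha, k, hk, rfl⟩ _ ⟨a', ha', k', hk', rfl⟩
    simp only [hπ_eq a ha k hk, hπ_eq a' ha' k' hk']
    constructor
    · rw [add_add_add_comm]
      exact hπ_eq _ (h.Aset_add l ha ha') _ (h.Kset_add hk hk')
    · have : (a + k) * (a' + k') = (a * a' + a * k' + k * a') + k * k' := by noncomm_ring
      rw [this]
      exact hπ_eq _ (h.Aset_add l (h.Aset_add l (h.Aset_mul l ha ha')
        (h.Aset_mul_Kset l hk' (by omega) ha)) (h.Kset_mul_Aset hk (by omega) ha')) _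
        (h.Kset_mul le_rfl hk hk')
  · rintro c _ ⟨a, ha, k, hk, rfl⟩
    simp only [hπ_eq a ha k hk, smul_add]
    exact hπ_eq _ (h.Aset_smul l c ha) _ (h.Kset_smul c hk)
  · rintro _ ⟨a, ha, k, hk, rfl⟩
    simp only [hπ_eq a ha k hk, star_add]
    exact hπ_eq _ (Tower.Aset_star l ha) _ (Tower.Kset_star hk)
  · intro k hk
    exact ⟨0 + k, ⟨0, hzero, k, hk, rfl⟩, hπ_eq 0 hzero k hk⟩
  · rintro _ ⟨a, ha, k, hk, rfl⟩
    simp only [hπ_eq a ha k hk]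
    have h1 := h.norm_le_add ha hk
    exact ⟨h1, (norm_sub_le _ _).trans (by linarith)⟩
end
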